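/- arXiv:solv-int/9907001 — 4 statements merged into one kernel-verified Lean document; each statement's English description precedes it below -/
import Mathlib

section
/- Let a, b > 0 be real. For every natural number k, the monic Jacobi polynomials satisfy (1 − x²)·p_k'(x) − (((a+b+2)x + (a−b))/2)·p_k(x) = −((2k + 2 + a + b)/2)·p_{k+1}(x) + [2k(a+b+k)(a+k)(b+k) / ((a+b+2k+1)(a+b+2k)(a+b+2k−1))]·p_{k−1}(x) for all real x (with the convention p_{−1} = 0, the p_{k−1} term being absent for k = 0). That is, the operator n = (1−x²)·(d/dx) − ((a+b+2)x + (a−b))/2 associated to the Jacobi weight (1−x)^a(1+x)^b acts tridiagonally on the monic Jacobi polynomials, and the coefficient of p_{k−1} equals ((2k+a+b)/2)·h_k/h_{k−1}. -/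
open Finset

/-- The Jacobi polynomial `P_n^{(a,b)}`. -/
noncomputable def jacobiP (a b : ℝ) (n : ℕ) (x : ℝ) : ℝ :=
  ∑ s ∈ range (n + 1),
    (Real.Gamma ((n : ℝ) + a + 1) / (Real.Gamma (a + (s : ℝ) + 1) * (Nat.factorial (n - s)))) *
    (Real.Gamma ((n : ℝ) + b + 1) / (Real.Gamma ((n : ℝ) + b - (s : ℝ) + 1) * (Nat.factorial s))) *
    ((x - 1) / 2) ^ s * ((x + 1) / 2) ^ (n - s)

/-- The monic Jacobi polynomials `p_k = 2^k k! Γ(a+b+k+1)/Γ(a+b+2k+1) · P_k^{(a,b)}`. -/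
noncomputable def jacobiMonic (a b : ℝ) (k : ℕ) (x : ℝ) : ℝ :=
  2 ^ k * (Nat.factorial k) * Real.Gamma (a + b + (k : ℝ) + 1) /
    Real.Gamma (a + b + 2 * (k : ℝ) + 1) * jacobiP a b k x

/-!
Write `u = (x - 1) / 2` and `v = (x + 1) / 2`, so that `v - u = 1` and `1 - x ^ 2 = -4 * u * v`.
Up to Gamma factors, `P_n^{(a,b)}(x)` is the degree `n` part of the product `𝒞_a(u) 𝒞_b(v)`, where
`𝒞_c(z) = ∑ z ^ i / (i! Γ(c + i + 1))` is the Bessel–Clifford function. With `θ = z d/dz`, the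
differential equation `θ (θ + c) 𝒞_c = z 𝒞_c` says that multiplication by `u` or `v` raises the
degree by one at the cost of a polynomial weight in the summation indices. Since `(v - u) ^ 2 = 1`,
all three terms of the relation can therefore be written in the degree `n + 1`, where the relation
reduces to a polynomial identity between the weights.
-/

/-- The `i`-th term `z ^ i / (i! Γ(c + i + 1))` of the Bessel–Clifford function `𝒞_c(z)`. The value
`1 / 0 = 0` at the poles of `Γ` is that of the entire function `1 / Γ`. -/
noncomputable def cliffordTerm (c z : ℝ) (i : ℕ) : ℝ :=
  z ^ i / (i.factorial * Real.Gamma (c + i + 1))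

/-- The degree `n` part of the product of Bessel–Clifford series `𝒞_a(u) 𝒞_b(v)`, with the term of
bidegree `(i, j)` weighted by `f i j`. The weight `1` gives `P_n^{(a,b)}` up to Gamma factors;
polynomial weights encode `u ∂/∂u` and `v ∂/∂v`. -/
noncomputable def cliffordSum (a b u v : ℝ) (n : ℕ) (f : ℝ → ℝ → ℝ) : ℝ :=
  ∑ p ∈ antidiagonal n, f p.1 p.2 * (cliffordTerm a u p.1 * cliffordTerm b v p.2)

/-- The weight by which multiplication by `(v - u) ^ 2`, which raises the degree by two, acts on
`cliffordSum`. -/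
def subSqWeight (a b i j : ℝ) : ℝ :=
  j * (b + j) * ((j - 1) * (b + j - 1)) - 2 * (i * (a + i) * (j * (b + j)))
    + i * (a + i) * ((i - 1) * (a + i - 1))

/-- The ratio of the monic Jacobi polynomial `p_k` to `cliffordSum` with weight `1`. -/
noncomputable def jacobiScale (a b : ℝ) (k : ℕ) : ℝ :=
  2 ^ k * k.factorial * Real.Gamma (a + b + k + 1) / Real.Gamma (a + b + 2 * k + 1)
    * (Real.Gamma (a + k + 1) * Real.Gamma (b + k + 1))

lemma inv_Gamma_eq_self_mul_inv_Gamma_add_one (s : ℝ) :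
    (Real.Gamma s)⁻¹ = s * (Real.Gamma (s + 1))⁻¹ := by
  rcases eq_or_ne s 0 with rfl | hs
  · simp
  · rw [Real.Gamma_add_one hs, mul_inv, mul_inv_cancel_left₀ hs]

lemma mul_cliffordTerm (c z : ℝ) (i : ℕ) :
    z * cliffordTerm c z i = (i + 1) * (c + (i + 1)) * cliffordTerm c z (i + 1) := by
  have hi : (i : ℝ) + 1 ≠ 0 := by positivity
  simp only [cliffordTerm, div_eq_mul_inv, mul_inv, Nat.factorial_succ, Nat.cast_mul,
    Nat.cast_add_one, ← add_assoc, inv_Gamma_eq_self_mul_inv_Gamma_add_one (c + i + 1)]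
  field_simp
  ring

lemma differentiable_cliffordTerm (c : ℝ) (i : ℕ) :
    Differentiable ℝ fun z ↦ cliffordTerm c z i :=
  (differentiable_pow i).div_const _

lemma mul_deriv_cliffordTerm (c z : ℝ) (i : ℕ) :
    z * deriv (fun z ↦ cliffordTerm c z i) z = i * cliffordTerm c z i := by
  simp only [cliffordTerm, deriv_div_const, deriv_pow_field]
  cases i with
  | zero => simp
  | succ i => rw [Nat.add_sub_cancel, pow_succ]; ring

lemma cliffordSum_swap (a b u v : ℝ) (n : ℕ) (f : ℝ → ℝ → ℝ) :
    cliffordSum b a v u n (fun j i ↦ f i j) = cliffordSum a b u v n f := by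
  rw [cliffordSum, cliffordSum, ← Nat.sum_antidiagonal_swap]
  simp only [Prod.fst_swap, Prod.snd_swap, mul_comm (cliffordTerm a u _)]

lemma left_mul_cliffordSum (a b u v : ℝ) (n : ℕ) (f : ℝ → ℝ → ℝ) :
    u * cliffordSum a b u v n f =
      cliffordSum a b u v (n + 1) fun i j ↦ i * (a + i) * f (i - 1) j := by
  simp only [cliffordSum, Nat.sum_antidiagonal_succ, mul_sum, Nat.cast_zero, zero_mul, zero_add,
    Nat.cast_add_one, add_sub_cancel_right]
  refine sum_congr rfl fun p _ ↦ ?_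
  linear_combination f p.1 p.2 * cliffordTerm b v p.2 * mul_cliffordTerm a u p.1

lemma right_mul_cliffordSum (a b u v : ℝ) (n : ℕ) (f : ℝ → ℝ → ℝ) :
    v * cliffordSum a b u v n f =
      cliffordSum a b u v (n + 1) fun i j ↦ j * (b + j) * f i (j - 1) := by
  rw [← cliffordSum_swap, left_mul_cliffordSum, ← cliffordSum_swap a b]

lemma sub_sq_mul_cliffordSum (a b u v : ℝ) (n : ℕ) :
    (v - u) ^ 2 * cliffordSum a b u v n 1 = cliffordSum a b u v (n + 2) (subSqWeight a b) := by
  have expand : (v - u) ^ 2 * cliffordSum a b u v n 1 =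
      v * (v * cliffordSum a b u v n 1) - 2 * (u * (v * cliffordSum a b u v n 1))
        + u * (u * cliffordSum a b u v n 1) := by ring
  rw [expand]
  simp only [left_mul_cliffordSum, right_mul_cliffordSum]
  simp only [cliffordSum, mul_sum, ← sum_sub_distrib, ← sum_add_distrib]
  refine sum_congr rfl fun p _ ↦ ?_
  simp only [subSqWeight, Pi.one_apply]
  ring

lemma cliffordSum_one_subSqWeight (a b u v : ℝ) :
    cliffordSum a b u v 1 (subSqWeight a b) = 0 := by
  simp [cliffordSum, subSqWeight, Nat.antidiagonal_succ]

lemma cliffordSum_three_term (a b u v : ℝ) (n : ℕ) :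
    (a + b + 2 * n + 1) *
        (-2 * (v * cliffordSum a b u v n (fun i _ ↦ i) + u * cliffordSum a b u v n (fun _ j ↦ j))
          - ((b + 1) * u + (a + 1) * v) * cliffordSum a b u v n 1) =
      -((n + 1) * (a + b + n + 1) * (n + 1 + a) * (n + 1 + b)) * cliffordSum a b u v (n + 1) 1
        + cliffordSum a b u v (n + 1) (subSqWeight a b) := by
  rw [add_mul ((b + 1) * u), mul_assoc (b + 1), mul_assoc (a + 1)]
  simp only [left_mul_cliffordSum, right_mul_cliffordSum]
  simp only [cliffordSum, mul_sum, ← sum_sub_distrib, ← sum_add_distrib]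
  refine sum_congr rfl fun p hp ↦ ?_
  have hn : (n : ℝ) = p.1 + p.2 - 1 := by
    rw [eq_sub_iff_add_eq]
    exact_mod_cast (mem_antidiagonal.mp hp).symm
  simp only [subSqWeight, Pi.one_apply, hn]
  ring

lemma hasDerivAt_cliffordTerm_mul (a b x : ℝ) (i j : ℕ) :
    HasDerivAt (fun y ↦ cliffordTerm a ((y - 1) / 2) i * cliffordTerm b ((y + 1) / 2) j)
      (deriv (fun z ↦ cliffordTerm a z i) ((x - 1) / 2) * (1 / 2)
          * cliffordTerm b ((x + 1) / 2) j
        + cliffordTerm a ((x - 1) / 2) i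
          * (deriv (fun z ↦ cliffordTerm b z j) ((x + 1) / 2) * (1 / 2))) x := by
  have hu : HasDerivAt (fun y : ℝ ↦ (y - 1) / 2) (1 / 2) x :=
    ((hasDerivAt_id x).sub_const 1).div_const 2
  have hv : HasDerivAt (fun y : ℝ ↦ (y + 1) / 2) (1 / 2) x :=
    ((hasDerivAt_id x).add_const 1).div_const 2
  exact ((differentiable_cliffordTerm a i _).hasDerivAt.comp x hu).mul
    ((differentiable_cliffordTerm b j _).hasDerivAt.comp x hv)

lemma one_sub_sq_mul_deriv_cliffordSum (a b : ℝ) (n : ℕ) (x : ℝ) :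
    (1 - x ^ 2) * deriv (fun y ↦ cliffordSum a b ((y - 1) / 2) ((y + 1) / 2) n 1) x =
      -2 * ((x + 1) / 2 * cliffordSum a b ((x - 1) / 2) ((x + 1) / 2) n (fun i _ ↦ i)
        + (x - 1) / 2 * cliffordSum a b ((x - 1) / 2) ((x + 1) / 2) n (fun _ j ↦ j)) := by
  simp only [cliffordSum, Pi.one_apply, one_mul]
  rw [(HasDerivAt.fun_sum fun p _ ↦ hasDerivAt_cliffordTerm_mul a b x p.1 p.2).deriv]
  simp only [mul_sum, ← sum_add_distrib]
  refine sum_congr rfl fun p _ ↦ ?_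
  linear_combination
    -2 * ((x + 1) / 2) * cliffordTerm b ((x + 1) / 2) p.2
        * mul_deriv_cliffordTerm a ((x - 1) / 2) p.1
      - 2 * ((x - 1) / 2) * cliffordTerm a ((x - 1) / 2) p.1
        * mul_deriv_cliffordTerm b ((x + 1) / 2) p.2

lemma jacobiP_eq_cliffordSum (a b : ℝ) (n : ℕ) (x : ℝ) :
    jacobiP a b n x = Real.Gamma (a + n + 1) * Real.Gamma (b + n + 1)
      * cliffordSum a b ((x - 1) / 2) ((x + 1) / 2) n 1 := by
  simp only [jacobiP, cliffordSum, Nat.sum_antidiagonal_eq_sum_range_succ_mk, mul_sum]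
  refine sum_congr rfl fun s hs ↦ ?_
  have hsub : b + ((n - s : ℕ) : ℝ) + 1 = b + n - s + 1 := by
    rw [Nat.cast_sub (mem_range_succ_iff.mp hs)]
    ring
  simp only [cliffordTerm, hsub, Pi.one_apply, div_eq_mul_inv, mul_inv, add_comm (n : ℝ) a,
    add_comm (n : ℝ) b]
  ring

lemma jacobiMonic_eq_cliffordSum (a b : ℝ) (k : ℕ) (x : ℝ) :
    jacobiMonic a b k x =
      jacobiScale a b k * cliffordSum a b ((x - 1) / 2) ((x + 1) / 2) k 1 := by
  rw [jacobiMonic, jacobiP_eq_cliffordSum, jacobiScale, mul_assoc _ (_ * _) (cliffordSum ..)]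

lemma deriv_jacobiMonic (a b : ℝ) (k : ℕ) (x : ℝ) :
    deriv (jacobiMonic a b k) x = jacobiScale a b k *
      deriv (fun y ↦ cliffordSum a b ((y - 1) / 2) ((y + 1) / 2) k 1) x := by
  rw [funext (jacobiMonic_eq_cliffordSum a b k), deriv_const_mul_field]

lemma Gamma_add_natCast_succ {c : ℝ} {k : ℕ} (hc : c + k + 1 ≠ 0) :
    Real.Gamma (c + (k + 1 : ℕ) + 1) = (c + k + 1) * Real.Gamma (c + k + 1) := by
  rw [← Real.Gamma_add_one hc, Nat.cast_add_one, ← add_assoc]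

lemma jacobiScale_succ {a b : ℝ} {k : ℕ} (ha : a + k + 1 ≠ 0) (hb : b + k + 1 ≠ 0)
    (hab : a + b + k + 1 ≠ 0) :
    (a + b + 2 * k + 1) * (a + b + 2 * k + 2) * jacobiScale a b (k + 1) =
      2 * (k + 1) * (a + b + k + 1) * (a + k + 1) * (b + k + 1) * jacobiScale a b k := by
  have hG : (Real.Gamma (a + b + 2 * k + 1))⁻¹ = (a + b + 2 * k + 1) * (a + b + 2 * k + 2)
      * (Real.Gamma (a + b + 2 * (k + 1 : ℕ) + 1))⁻¹ := by
    rw [inv_Gamma_eq_self_mul_inv_Gamma_add_one, inv_Gamma_eq_self_mul_inv_Gamma_add_one (_ + 1),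
      ← mul_assoc]
    push_cast
    ring_nf
  simp only [jacobiScale, div_eq_mul_inv, Gamma_add_natCast_succ ha, Gamma_add_natCast_succ hb,
    Gamma_add_natCast_succ hab, hG, Nat.factorial_succ]
  push_cast
  ring

lemma jacobiScale_mul_cliffordSum_subSqWeight {a b : ℝ} (ha : ∀ m : ℕ, a + m + 1 ≠ 0)
    (hb : ∀ m : ℕ, b + m + 1 ≠ 0) (hab : ∀ m : ℕ, a + b + m + 1 ≠ 0) (k : ℕ) (x : ℝ) :
    jacobiScale a b k
        * cliffordSum a b ((x - 1) / 2) ((x + 1) / 2) (k + 1) (subSqWeight a b) =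
      (a + b + 2 * k + 1) * (2 * k * (a + b + k) * (a + k) * (b + k) /
        ((a + b + 2 * k + 1) * (a + b + 2 * k) * (a + b + 2 * k - 1)))
          * jacobiMonic a b (k - 1) x := by
  cases k with
  | zero => simp [cliffordSum_one_subSqWeight]
  | succ m =>
    have scale := jacobiScale_succ (ha m) (hb m) (hab m)
    have h₀ : a + b + 2 * (m + 1) + 1 ≠ 0 := by
      convert hab (2 * m + 2) using 1; push_cast; ring
    have h₁ : a + b + 2 * (m + 1) ≠ 0 := by
      convert hab (2 * m + 1) using 1; push_cast; ring
    have h₂ : a + b + 2 * (m + 1) - 1 ≠ 0 := by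
      convert hab (2 * m) using 1; push_cast; ring
    have degree_drop : cliffordSum a b ((x - 1) / 2) ((x + 1) / 2) (m + 1 + 1) (subSqWeight a b) =
        cliffordSum a b ((x - 1) / 2) ((x + 1) / 2) m 1 := by
      rw [← sub_sq_mul_cliffordSum]
      ring
    rw [degree_drop, Nat.add_sub_cancel, jacobiMonic_eq_cliffordSum]
    push_cast
    field_simp
    linear_combination cliffordSum a b ((x - 1) / 2) ((x + 1) / 2) m 1 * scale

theorem jacobi_nOp_tridiagonal_general (a b : ℝ) (ha : ∀ m : ℕ, a + m + 1 ≠ 0)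
    (hb : ∀ m : ℕ, b + m + 1 ≠ 0) (hab : ∀ m : ℕ, a + b + m + 1 ≠ 0) (k : ℕ) (x : ℝ) :
    (1 - x ^ 2) * deriv (jacobiMonic a b k) x
        - (((a + b + 2) * x + (a - b)) / 2) * jacobiMonic a b k x
      = -((2 * (k : ℝ) + 2 + a + b) / 2) * jacobiMonic a b (k + 1) x
        + (2 * (k : ℝ) * (a + b + k) * (a + k) * (b + k) /
            ((a + b + 2 * k + 1) * (a + b + 2 * k) * (a + b + 2 * k - 1)))
          * jacobiMonic a b (k - 1) x := by
  have hk : a + b + 2 * k + 1 ≠ 0 := by simpa using hab (2 * k)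
  have hderiv := one_sub_sq_mul_deriv_cliffordSum a b k x
  have three_term := cliffordSum_three_term a b ((x - 1) / 2) ((x + 1) / 2) k
  have upper := jacobiScale_succ (ha k) (hb k) (hab k)
  have lower := jacobiScale_mul_cliffordSum_subSqWeight ha hb hab k x
  apply mul_left_cancel₀ hk
  rw [mul_add, ← mul_assoc _ (_ / _), ← lower, deriv_jacobiMonic, jacobiMonic_eq_cliffordSum,
    jacobiMonic_eq_cliffordSum]
  rw [← hderiv] at three_term
  linear_combination jacobiScale a b k * three_term
    + cliffordSum a b ((x - 1) / 2) ((x + 1) / 2) (k + 1) 1 / 2 * upper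

/-- The operator `n = (1−x²)·(d/dx) − ((a+b+2)x + (a−b))/2` acts tridiagonally on the
monic Jacobi polynomials. -/
theorem jacobi_nOp_tridiagonal (a b : ℝ) (ha : 0 < a) (hb : 0 < b) (k : ℕ) (x : ℝ) :
    (1 - x ^ 2) * deriv (jacobiMonic a b k) x
        - (((a + b + 2) * x + (a - b)) / 2) * jacobiMonic a b k x
      = -((2 * (k : ℝ) + 2 + a + b) / 2) * jacobiMonic a b (k + 1) x
        + (2 * (k : ℝ) * (a + b + k) * (a + k) * (b + k) /
            ((a + b + 2 * k + 1) * (a + b + 2 * k) * (a + b + 2 * k - 1)))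
          * jacobiMonic a b (k - 1) x :=
  jacobi_nOp_tridiagonal_general a b (fun _ ↦ by positivity) (fun _ ↦ by positivity)
    (fun _ ↦ by positivity) k x
end

section
/- Define q_{2m+1}(x) = p_{2m+1}(x) and q_{2m}(x) = m! Σ_{n=0}^{m} p_{2n}(x)/n!, where p_k are the monic Hermite polynomials. Then the family {q_j} is skew orthogonal with respect to the β = 4 skew inner product with weight e^{−x²} on ℝ: for all natural numbers m, n one has ⟨q_{2m}, q_{2n}⟩₄ = 0, ⟨q_{2m+1}, q_{2n+1}⟩₄ = 0, and ⟨q_{2m}, q_{2n+1}⟩₄ = 0 if m ≠ n, while ⟨q_{2m}, q_{2m+1}⟩₄ = 2^{−2m−1} √π (2m+1)!. -/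
open MeasureTheory Finset

/-- The physicists' Hermite polynomials. -/
noncomputable def hermiteH : ℕ → ℝ → ℝ
  | 0, _ => 1
  | 1, x => 2 * x
  | (n + 2), x => 2 * x * hermiteH (n + 1) x - 2 * (n + 1) * hermiteH n x

/-- The monic Hermite polynomials `p_k = 2^{−k} H_k`. -/
noncomputable def hermiteP (k : ℕ) (x : ℝ) : ℝ := hermiteH k x / 2 ^ k

/-- The skew orthogonal candidates: `q_{2m+1} = p_{2m+1}`,
`q_{2m} = m! Σ_{n=0}^m p_{2n}/n!`. -/
noncomputable def qGSE (j : ℕ) (x : ℝ) : ℝ :=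
  if j % 2 = 1 then hermiteP j x
  else (Nat.factorial (j / 2)) *
    ∑ n ∈ range (j / 2 + 1), hermiteP (2 * n) x / (Nat.factorial n)

/-- The β = 4 skew inner product with weight `e^{−x²}` on ℝ. -/
noncomputable def sip4 (f g : ℝ → ℝ) : ℝ :=
  (1 / 2) * ∫ x : ℝ, Real.exp (-x ^ 2) * (f x * deriv g x - deriv f x * g x)

/-! Everything is algebra over one analytic input, Stein's identity `L (X p) = c L (p')` for the
Gaussian functional `L p = ∫ e^{-x²} p` with variance `c = 1/2`. It moves the raising operator
`p ↦ X p - c p'` across `L` as `c` times a derivative, which gives orthogonality of the Hermite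
polynomials, and it turns `c L (p q' - p' q)` into `L ((X p - 2c p') q)`. The even skew orthogonal
polynomials are the preimages of the odd Hermite polynomials under `p ↦ X p - 2c p'`, so their skew
products are ordinary Hermite products. -/

section Hermite

open Polynomial

variable {R : Type*} [CommRing R]

/-- The monic orthogonal polynomials of the centred Gaussian law of variance `c`, built by the
raising operator. The value `c = 1` is Mathlib's `Polynomial.hermite`, and `c = 1/2` is the
family `hermiteP`. -/
noncomputable def hermiteOfVariance (c : R) : ℕ → R[X]
  | 0 => 1
  | n + 1 => X * hermiteOfVariance c n - c • derivative (hermiteOfVariance c n)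

lemma derivative_hermiteOfVariance_succ (c : R) (n : ℕ) :
    derivative (hermiteOfVariance c (n + 1)) = (n + 1) • hermiteOfVariance c n := by
  induction n with
  | zero => simp [hermiteOfVariance]
  | succ n ih =>
    calc derivative (hermiteOfVariance c (n + 2))
      _ = hermiteOfVariance c (n + 1) + (n + 1) •
            (X * hermiteOfVariance c n - c • derivative (hermiteOfVariance c n)) := by
        rw [hermiteOfVariance, derivative_sub, derivative_mul, derivative_X, one_mul,
          derivative_smul, ih, map_nsmul, smul_sub, mul_smul_comm, smul_comm c, add_sub_assoc]
      _ = (n + 2) • hermiteOfVariance c (n + 1) := by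
        rw [← hermiteOfVariance, succ_nsmul' _ (n + 1)]

lemma hermiteOfVariance_add_two (c : R) (n : ℕ) :
    hermiteOfVariance c (n + 2) =
      X * hermiteOfVariance c (n + 1) - c • (n + 1) • hermiteOfVariance c n := by
  rw [hermiteOfVariance, derivative_hermiteOfVariance_succ]

/-- The even members of the `β = 4` skew orthogonal family for the centred Gaussian weight of
variance `c`. The recursion unfolds to `∑ n ≤ m, (2c)^(m-n) (m!/n!) p_{2n}` but needs no
division. -/
noncomputable def skewHermiteEven (c : R) : ℕ → R[X]
  | 0 => 1
  | m + 1 => hermiteOfVariance c (2 * m + 2) + (2 * c * (m + 1)) • skewHermiteEven c m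

lemma X_mul_skewHermiteEven_sub_derivative (c : R) (m : ℕ) :
    X * skewHermiteEven c m - (2 * c) • derivative (skewHermiteEven c m) =
      hermiteOfVariance c (2 * m + 1) := by
  induction m with
  | zero => simp [skewHermiteEven, hermiteOfVariance]
  | succ m ih =>
    have recurrence := hermiteOfVariance_add_two c (2 * m + 1)
    rw [skewHermiteEven, derivative_add, derivative_smul, derivative_hermiteOfVariance_succ,
      show 2 * (m + 1) + 1 = 2 * m + 1 + 2 by ring, recurrence]
    simp only [smul_eq_C_mul, nsmul_eq_mul, map_mul, map_add, map_ofNat, map_natCast,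
      map_one] at ih ⊢
    push_cast
    linear_combination 2 * C c * ((m : R[X]) + 1) * ih

/-- Stein's identity: `L` integrates polynomials by parts like the centred Gaussian law of
variance `c`. The total mass `L 1` is left free. -/
def IsSteinFunctional (c : R) (L : R[X] →ₗ[R] R) : Prop :=
  ∀ p, L (X * p) = c * L (derivative p)

namespace IsSteinFunctional

variable {c : R} {L : R[X] →ₗ[R] R}

lemma map_hermite_succ_mul (hL : IsSteinFunctional c L) (n : ℕ) (q : R[X]) :
    L (hermiteOfVariance c (n + 1) * q) = c * L (hermiteOfVariance c n * derivative q) := by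
  have stein := hL (hermiteOfVariance c n * q)
  rw [derivative_mul, map_add] at stein
  rw [hermiteOfVariance, sub_mul, map_sub, mul_assoc, smul_mul_assoc, map_smul, smul_eq_mul]
  linear_combination stein

lemma map_hermite_mul_hermite (hL : IsSteinFunctional c L) (n k : ℕ) :
    L (hermiteOfVariance c n * hermiteOfVariance c k) =
      if n = k then n.factorial * c ^ n * L 1 else 0 := by
  induction n generalizing k with
  | zero =>
    cases k with
    | zero => simp [hermiteOfVariance]
    | succ k =>
      rw [mul_comm, hL.map_hermite_succ_mul]
      simp [hermiteOfVariance]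
  | succ n ih =>
    rw [hL.map_hermite_succ_mul]
    cases k with
    | zero => simp [hermiteOfVariance]
    | succ k =>
      rw [derivative_hermiteOfVariance_succ, mul_smul_comm, map_nsmul, ih]
      by_cases hnk : n = k
      · subst hnk
        simp only [if_true, Nat.factorial_succ, nsmul_eq_mul]
        push_cast
        ring
      · simp [hnk]

lemma map_hermite_odd_mul_skewHermiteEven (hL : IsSteinFunctional c L) (m n : ℕ) :
    L (hermiteOfVariance c (2 * m + 1) * skewHermiteEven c n) = 0 := by
  induction n with
  | zero =>
    rw [hL.map_hermite_succ_mul]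
    simp [skewHermiteEven]
  | succ n ih =>
    rw [skewHermiteEven, mul_add, map_add, hL.map_hermite_mul_hermite, if_neg (by lia),
      mul_smul_comm, map_smul, ih, smul_zero, add_zero]

lemma const_mul_map_wronskian (hL : IsSteinFunctional c L) (p q : R[X]) :
    c * L (wronskian p q) = L ((X * p - (2 * c) • derivative p) * q) := by
  have stein := hL (p * q)
  rw [derivative_mul, map_add] at stein
  rw [wronskian, sub_mul, map_sub, map_sub, mul_assoc, smul_mul_assoc, map_smul, smul_eq_mul]
  linear_combination -stein

lemma const_mul_map_wronskian_skewHermiteEven (hL : IsSteinFunctional c L) (m : ℕ) (q : R[X]) :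
    c * L (wronskian (skewHermiteEven c m) q) = L (hermiteOfVariance c (2 * m + 1) * q) := by
  rw [hL.const_mul_map_wronskian, X_mul_skewHermiteEven_sub_derivative]

lemma map_wronskian_hermite_odd (hL : IsSteinFunctional c L) (m n : ℕ) :
    L (wronskian (hermiteOfVariance c (2 * m + 1)) (hermiteOfVariance c (2 * n + 1))) = 0 := by
  rw [wronskian, derivative_hermiteOfVariance_succ, derivative_hermiteOfVariance_succ, map_sub,
    mul_smul_comm, smul_mul_assoc, map_nsmul, map_nsmul, hL.map_hermite_mul_hermite,
    hL.map_hermite_mul_hermite, if_neg (by lia), if_neg (by lia), smul_zero, smul_zero, sub_zero]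

end IsSteinFunctional

end Hermite

section Gaussian

open Polynomial

variable {b : ℝ}

lemma integrable_exp_neg_mul_sq_mul_eval (hb : 0 < b) (p : ℝ[X]) :
    Integrable fun x : ℝ => Real.exp (-b * x ^ 2) * p.eval x := by
  induction p using Polynomial.induction_on' with
  | add p q hp hq =>
    simp only [eval_add, mul_add]
    exact hp.add hq
  | monomial n a =>
    have hn : (-1 : ℝ) < n := neg_one_lt_zero.trans_le n.cast_nonneg
    refine ((integrable_rpow_mul_exp_neg_mul_sq hb hn).const_mul a).congr (.of_forall fun x => ?_)
    simp only [eval_monomial, Real.rpow_natCast]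
    ring

/-- Integration of polynomials against the unnormalised Gaussian weight `e^{-b x²}`, of variance
`1/(2b)`. Positivity of `b` is an argument because linearity rests on integrability. -/
noncomputable def gaussianFunctional (hb : 0 < b) : ℝ[X] →ₗ[ℝ] ℝ where
  toFun p := ∫ x : ℝ, Real.exp (-b * x ^ 2) * p.eval x
  map_add' p q := by
    simp only [eval_add, mul_add]
    exact integral_add (integrable_exp_neg_mul_sq_mul_eval hb p)
      (integrable_exp_neg_mul_sq_mul_eval hb q)
  map_smul' a p := by
    simp only [eval_smul, smul_eq_mul, RingHom.id_apply, mul_left_comm _ a, integral_const_mul]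

lemma gaussianFunctional_one (hb : 0 < b) : gaussianFunctional hb 1 = √(Real.pi / b) := by
  simp [gaussianFunctional, ← integral_gaussian]

lemma hasDerivAt_exp_neg_mul_sq_mul_eval (b : ℝ) (p : ℝ[X]) (x : ℝ) :
    HasDerivAt (fun x : ℝ => Real.exp (-b * x ^ 2) * p.eval x)
      (Real.exp (-b * x ^ 2) * (derivative p - (2 * b) • (X * p)).eval x) x := by
  have product_rule := (((hasDerivAt_pow 2 x).const_mul (-b)).exp).mul (p.hasDerivAt x)
  refine product_rule.congr_deriv ?_
  simp only [eval_sub, eval_smul, eval_mul, eval_X, smul_eq_mul]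
  push_cast
  ring

lemma isSteinFunctional_gaussianFunctional (hb : 0 < b) :
    IsSteinFunctional (1 / (2 * b)) (gaussianFunctional hb) := by
  intro p
  have parts : gaussianFunctional hb (derivative p - (2 * b) • (X * p)) = 0 :=
    integral_eq_zero_of_hasDerivAt_of_integrable (hasDerivAt_exp_neg_mul_sq_mul_eval b p)
      (integrable_exp_neg_mul_sq_mul_eval hb _) (integrable_exp_neg_mul_sq_mul_eval hb p)
  rw [map_sub, map_smul, smul_eq_mul, sub_eq_zero] at parts
  rw [parts, one_div, inv_mul_cancel_left₀ (by positivity)]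

lemma sip4_eval (p q : ℝ[X]) :
    sip4 (fun x => p.eval x) (fun x => q.eval x) =
      1 / 2 * gaussianFunctional one_pos (wronskian p q) := by
  simp [sip4, gaussianFunctional, wronskian]

end Gaussian

section SkewOrthogonalFamily

open Polynomial

lemma hermiteP_add_two (n : ℕ) (x : ℝ) :
    hermiteP (n + 2) x = x * hermiteP (n + 1) x - (n + 1) / 2 * hermiteP n x := by
  simp only [hermiteP, hermiteH]
  field_simp
  ring

lemma hermiteP_eq_eval (n : ℕ) :
    hermiteP n = fun x => (hermiteOfVariance (1 / 2 : ℝ) n).eval x := by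
  ext x
  induction n using Nat.twoStepInduction with
  | zero => simp [hermiteP, hermiteH, hermiteOfVariance]
  | one => simp [hermiteP, hermiteH, hermiteOfVariance]
  | more n ih ih_succ =>
    rw [hermiteP_add_two, ih, ih_succ, hermiteOfVariance_add_two]
    simp only [eval_sub, eval_mul, eval_X, eval_smul, eval_natCast, smul_eq_mul, nsmul_eq_mul]
    push_cast
    ring

lemma qGSE_odd (m : ℕ) : qGSE (2 * m + 1) = hermiteP (2 * m + 1) := by
  ext x
  rw [qGSE, if_pos (by lia)]

lemma qGSE_even (m : ℕ) (x : ℝ) :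
    qGSE (2 * m) x = m.factorial * ∑ n ∈ range (m + 1), hermiteP (2 * n) x / n.factorial := by
  rw [qGSE, if_neg (by lia), Nat.mul_div_cancel_left m two_pos]

lemma qGSE_even_succ (m : ℕ) (x : ℝ) :
    qGSE (2 * (m + 1)) x = hermiteP (2 * (m + 1)) x + (m + 1) * qGSE (2 * m) x := by
  rw [qGSE_even, qGSE_even, sum_range_succ _ (m + 1), mul_add,
    mul_div_cancel₀ _ (by positivity), Nat.factorial_succ]
  push_cast
  ring

lemma qGSE_even_eq_eval (m : ℕ) :
    qGSE (2 * m) = fun x => (skewHermiteEven (1 / 2 : ℝ) m).eval x := by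
  ext x
  induction m with
  | zero =>
    rw [qGSE_even]
    simp [skewHermiteEven, hermiteP, hermiteH]
  | succ m ih =>
    rw [qGSE_even_succ, ih, hermiteP_eq_eval, skewHermiteEven, Nat.mul_succ]
    simp

lemma qGSE_odd_eq_eval (m : ℕ) :
    qGSE (2 * m + 1) = fun x => (hermiteOfVariance (1 / 2 : ℝ) (2 * m + 1)).eval x := by
  rw [qGSE_odd, hermiteP_eq_eval]

end SkewOrthogonalFamily

/-- The family `{q_j}` is skew orthogonal for the β = 4 Hermite skew inner product,
with normalizations `r_m = 2^{−2m−1} √π (2m+1)!`. -/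
theorem hermite_skew_orthogonal_beta4 (m n : ℕ) :
    sip4 (qGSE (2 * m)) (qGSE (2 * n)) = 0 ∧
    sip4 (qGSE (2 * m + 1)) (qGSE (2 * n + 1)) = 0 ∧
    (m ≠ n → sip4 (qGSE (2 * m)) (qGSE (2 * n + 1)) = 0) ∧
    sip4 (qGSE (2 * m)) (qGSE (2 * m + 1))
      = Real.sqrt Real.pi * (Nat.factorial (2 * m + 1)) / 2 ^ (2 * m + 1) := by
  have stein : IsSteinFunctional (1 / 2) (gaussianFunctional one_pos) := by
    simpa only [mul_one] using isSteinFunctional_gaussianFunctional one_pos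
  simp only [qGSE_even_eq_eval, qGSE_odd_eq_eval, sip4_eval]
  refine ⟨?even_even, ?odd_odd, fun hmn => ?even_odd, ?normalization⟩
  case even_even =>
    rw [stein.const_mul_map_wronskian_skewHermiteEven, stein.map_hermite_odd_mul_skewHermiteEven]
  case odd_odd =>
    rw [stein.map_wronskian_hermite_odd, mul_zero]
  case even_odd =>
    rw [stein.const_mul_map_wronskian_skewHermiteEven, stein.map_hermite_mul_hermite,
      if_neg (by lia)]
  case normalization =>
    rw [stein.const_mul_map_wronskian_skewHermiteEven, stein.map_hermite_mul_hermite, if_pos rfl,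
      gaussianFunctional_one, div_one, one_div_pow]
    ring
end

section
/- Let a > −1 be real. Define q̃_{2m+1}(x) = p_{2m+1}(x) and q̃_{2m}(x) = 2^{2m} m! Γ(a/2 + m + 1) Σ_{j=0}^{m} p_{2j}(x) / (2^{2j} j! Γ(a/2 + j + 1)), where p_k are the monic Laguerre polynomials with parameter a. Then the family {q̃_j} is skew orthogonal with respect to the β = 4 skew inner product with weight x^{a+1} e^{−x} on (0, ∞): for all natural numbers m, n one has ⟨q̃_{2m}, q̃_{2n}⟩₄ = 0, ⟨q̃_{2m+1}, q̃_{2n+1}⟩₄ = 0, and ⟨q̃_{2m}, q̃_{2n+1}⟩₄ = 0 if m ≠ n, while ⟨q̃_{2m}, q̃_{2m+1}⟩₄ = (1/2)·Γ(2m + 2)·Γ(a + 2m + 2). -/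
open MeasureTheory Finset

/-- The generalized Laguerre polynomial `L_n^a`. -/
noncomputable def laguerreL (a : ℝ) (n : ℕ) (x : ℝ) : ℝ :=
  ∑ k ∈ range (n + 1),
    (-1) ^ k * (Real.Gamma ((n : ℝ) + a + 1) /
      (Real.Gamma ((k : ℝ) + a + 1) * (Nat.factorial k) * (Nat.factorial (n - k)))) * x ^ k

/-- The monic Laguerre polynomials `p_k = (−1)^k k! L_k^a`. -/
noncomputable def laguerreP (a : ℝ) (k : ℕ) (x : ℝ) : ℝ :=
  (-1) ^ k * (Nat.factorial k) * laguerreL a k x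

/-- The skew orthogonal candidates: `q̃_{2m+1} = p_{2m+1}`,
`q̃_{2m} = 2^{2m} m! Γ(a/2+m+1) Σ_{j=0}^m p_{2j}/(2^{2j} j! Γ(a/2+j+1))`. -/
noncomputable def qLSE (a : ℝ) (j : ℕ) (x : ℝ) : ℝ :=
  if j % 2 = 1 then laguerreP a j x
  else 2 ^ j * (Nat.factorial (j / 2)) * Real.Gamma (a / 2 + (j / 2 : ℕ) + 1) *
    ∑ i ∈ range (j / 2 + 1),
      laguerreP a (2 * i) x /
        (2 ^ (2 * i) * (Nat.factorial i) * Real.Gamma (a / 2 + (i : ℝ) + 1))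

/-- The β = 4 skew inner product with weight `x^{a+1} e^{−x}` on `(0, ∞)`. -/
noncomputable def sip4L (a : ℝ) (f g : ℝ → ℝ) : ℝ :=
  (1 / 2) * ∫ x in Set.Ioi (0 : ℝ),
    x ^ (a + 1) * Real.exp (-x) * (f x * deriv g x - deriv f x * g x)

/-!
Normalised, the moments of the weight `x^a e^{-x}` are the rising factorials `(a + 1)_k`, and
integration by parts against it becomes `𝓛 (X f') = 𝓛 (X f) - (a + 1) 𝓛 f` for the moment
functional `𝓛`. The monic Laguerre polynomials are generated by
`p_{n+1} = (X - (a + 1 + n)) p_n - X p_n'`, so this identity reads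
`𝓛 (X f' p_n) = 𝓛 (f p_{n+1}) + n 𝓛 (f p_n)`. With `f = X^k` it gives orthogonality, and applied
twice it gives
`𝓛 (X (p_j p_k' - p_j' p_k)) = 𝓛 (p_{j+1} p_k) - 𝓛 (p_j p_{k+1}) + (j - k) 𝓛 (p_j p_k)`:
the skew inner product of `p_j` and `p_k` vanishes unless `j` and `k` are neighbours. The even
polynomials satisfy `q̃_{2m+2} = p_{2m+2} + (2m + 2) (2m + 2 + a) q̃_{2m}`, where the coefficient is
the ratio of the squared norms of `p_{2m+2}` and `p_{2m+1}`; this cancels the pairing of `p_{2m+2}`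
with `p_{2m+1}`.
-/

open Polynomial

section Algebraic

variable {R : Type*} [CommRing R]

/-- The expectation of a polynomial under the gamma distribution of shape `s` and rate `1`, made
algebraic (hence available in any commutative ring) through its moments `X ^ k ↦ (s)_k`. -/
noncomputable def gammaMoment (s : R) : R[X] →ₗ[R] R :=
  (basisMonomials R).constr R fun k => (ascPochhammer R k).eval s

lemma gammaMoment_X_pow (s : R) (k : ℕ) :
    gammaMoment s (X ^ k) = (ascPochhammer R k).eval s := by
  rw [← monomial_one_right_eq_X_pow]
  simpa only [gammaMoment, coe_basisMonomials] using (basisMonomials R).constr_basis R _ k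

lemma gammaMoment_monomial (s c : R) (k : ℕ) :
    gammaMoment s (monomial k c) = c * (ascPochhammer R k).eval s := by
  rw [← smul_X_eq_monomial, map_smul, gammaMoment_X_pow, smul_eq_mul]

lemma gammaMoment_X_mul (s : R) (f : R[X]) :
    gammaMoment s (X * f) = s * gammaMoment (s + 1) f := by
  induction f using Polynomial.induction_on' with
  | add f g hf hg => rw [mul_add, map_add, hf, hg, map_add, mul_add]
  | monomial k c =>
    rw [X_mul_monomial, gammaMoment_monomial, gammaMoment_monomial, ascPochhammer_succ_left]
    simp only [eval_mul, eval_X, eval_comp, eval_add, eval_one]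
    ring

lemma gammaMoment_X_mul_derivative (s : R) (f : R[X]) :
    gammaMoment s (X * derivative f) = gammaMoment s (X * f) - s * gammaMoment s f := by
  induction f using Polynomial.induction_on' with
  | add f g hf hg => simp only [mul_add, map_add, hf, hg]; ring
  | monomial k c =>
    have X_mul_derivative_monomial : X * derivative (monomial k c) = monomial k (c * k) := by
      cases k <;> simp [X_mul_monomial]
    rw [X_mul_derivative_monomial, X_mul_monomial]
    simp only [gammaMoment_monomial, ascPochhammer_succ_eval]
    ring

/-- The monic Laguerre polynomial of degree `n` and parameter `a`, generated by the raising operator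
`f ↦ (X - (a + 1 + n)) f - X f'`, which makes sense in any commutative ring. -/
noncomputable def monicLaguerre (a : R) : ℕ → R[X]
  | 0 => 1
  | n + 1 => (X - C (a + 1 + n)) * monicLaguerre a n - X * derivative (monicLaguerre a n)

lemma coeff_monicLaguerre_succ_zero (a : R) (n : ℕ) :
    (monicLaguerre a (n + 1)).coeff 0 = -(a + 1 + n) * (monicLaguerre a n).coeff 0 := by
  simp [monicLaguerre, mul_coeff_zero]

lemma coeff_monicLaguerre_succ_succ (a : R) (n k : ℕ) :
    (monicLaguerre a (n + 1)).coeff (k + 1) =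
      (monicLaguerre a n).coeff k - (a + n + k + 2) * (monicLaguerre a n).coeff (k + 1) := by
  rw [monicLaguerre, sub_mul, coeff_sub, coeff_sub, coeff_X_mul, coeff_C_mul, coeff_X_mul,
    coeff_derivative]
  ring

lemma natDegree_monicLaguerre_le (a : R) (n : ℕ) : (monicLaguerre a n).natDegree ≤ n := by
  induction n with
  | zero => simp [monicLaguerre]
  | succ n ih =>
    rw [natDegree_le_iff_coeff_eq_zero] at ih ⊢
    intro k hk
    obtain ⟨k, rfl⟩ := Nat.exists_eq_add_one_of_ne_zero (Nat.ne_zero_of_lt hk)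
    rw [coeff_monicLaguerre_succ_succ, ih k (by lia), ih (k + 1) (by lia), mul_zero, sub_zero]

lemma coeff_monicLaguerre_self (a : R) (n : ℕ) : (monicLaguerre a n).coeff n = 1 := by
  induction n with
  | zero => simp [monicLaguerre]
  | succ n ih =>
    have coeff_eq_zero : (monicLaguerre a n).coeff (n + 1) = 0 :=
      coeff_eq_zero_of_natDegree_lt (Nat.lt_succ_of_le (natDegree_monicLaguerre_le a n))
    rw [coeff_monicLaguerre_succ_succ, ih, coeff_eq_zero, mul_zero, sub_zero]

lemma coeff_monicLaguerre_mul_ascPochhammer (a : R) (n k : ℕ) :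
    (monicLaguerre a n).coeff k * (ascPochhammer R k).eval (a + 1) =
      (-1) ^ (n + k) * n.choose k * (ascPochhammer R n).eval (a + 1) := by
  induction n generalizing k with
  | zero => cases k <;> simp [monicLaguerre, coeff_one]
  | succ n ih =>
    cases k with
    | zero =>
      have ih_zero := ih 0
      simp only [ascPochhammer_zero, eval_one, Nat.choose_zero_right] at ih_zero ⊢
      rw [coeff_monicLaguerre_succ_zero, ascPochhammer_succ_eval]
      linear_combination (-(a + 1 + n)) * ih_zero
    | succ k =>
      have ih_succ := ih (k + 1)
      have choose_succ : (n.choose (k + 1) : R) * (k + 1) = n.choose k * (n - k) := by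
        rcases le_or_gt k n with hkn | hnk
        · rw [← Nat.cast_sub hkn]
          exact_mod_cast congrArg (Nat.cast (R := R)) (Nat.choose_succ_right_eq n k)
        · simp [Nat.choose_eq_zero_of_lt hnk, Nat.choose_eq_zero_of_lt (Nat.lt_succ_of_lt hnk)]
      rw [ascPochhammer_succ_eval] at ih_succ
      rw [coeff_monicLaguerre_succ_succ, Nat.choose_succ_succ, ascPochhammer_succ_eval,
        ascPochhammer_succ_eval]
      push_cast
      linear_combination (a + 1 + k) * ih k - (a + n + k + 2) * ih_succ +
        (-1) ^ (n + k) * (ascPochhammer R n).eval (a + 1) * choose_succ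

lemma gammaMoment_X_mul_derivative_mul_monicLaguerre (a : R) (f : R[X]) (n : ℕ) :
    gammaMoment (a + 1) (X * derivative f * monicLaguerre a n) =
      gammaMoment (a + 1) (f * monicLaguerre a (n + 1)) +
        n * gammaMoment (a + 1) (f * monicLaguerre a n) := by
  have by_parts := gammaMoment_X_mul_derivative (a + 1) (f * monicLaguerre a n)
  have raising : f * monicLaguerre a (n + 1) =
      X * (f * monicLaguerre a n) - (a + 1 + n) • (f * monicLaguerre a n) -
        (X * derivative (f * monicLaguerre a n) - X * derivative f * monicLaguerre a n) := by
    rw [monicLaguerre, derivative_mul, smul_eq_C_mul]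
    ring
  rw [raising]
  simp only [map_sub, map_smul, smul_eq_mul]
  linear_combination by_parts

lemma gammaMoment_X_pow_mul_monicLaguerre (a : R) (k n : ℕ) :
    gammaMoment (a + 1) (X ^ k * monicLaguerre a n) =
      k.descFactorial n * (ascPochhammer R k).eval (a + 1) := by
  rw [← descPochhammer_eval_eq_descFactorial]
  induction n with
  | zero => simp [monicLaguerre, gammaMoment_X_pow]
  | succ n ih =>
    have X_mul_derivative_X_pow : X * derivative (X ^ k : R[X]) = (k : R) • X ^ k := by
      cases k with
      | zero => simp
      | succ k => rw [derivative_X_pow, Nat.add_sub_cancel, smul_eq_C_mul]; ring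
    have lowering := gammaMoment_X_mul_derivative_mul_monicLaguerre a (X ^ k) n
    rw [X_mul_derivative_X_pow, smul_mul_assoc, map_smul, smul_eq_mul] at lowering
    rw [descPochhammer_succ_eval]
    linear_combination (k - n : R) * ih - lowering

/-- The squared norm `n! (a + 1)_n` of `monicLaguerre a n` with respect to `gammaMoment (a + 1)`. -/
noncomputable def laguerreSqNorm (a : R) (n : ℕ) : R :=
  n.factorial * (ascPochhammer R n).eval (a + 1)

lemma laguerreSqNorm_succ (a : R) (n : ℕ) :
    laguerreSqNorm a (n + 1) = (n + 1) * (n + 1 + a) * laguerreSqNorm a n := by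
  rw [laguerreSqNorm, laguerreSqNorm, Nat.factorial_succ, ascPochhammer_succ_eval]
  push_cast
  ring

lemma gammaMoment_mul_monicLaguerre_of_natDegree_le (a : R) {f : R[X]} {n : ℕ}
    (hf : f.natDegree ≤ n) :
    gammaMoment (a + 1) (f * monicLaguerre a n) = f.coeff n * laguerreSqNorm a n := by
  have moment_lower : ∀ k ∈ range n,
      gammaMoment (a + 1) (C (f.coeff k) * X ^ k * monicLaguerre a n) = 0 := fun k hk => by
    rw [mul_assoc, ← smul_eq_C_mul, map_smul, gammaMoment_X_pow_mul_monicLaguerre,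
      Nat.descFactorial_of_lt (mem_range.mp hk), Nat.cast_zero, zero_mul, smul_zero]
  nth_rewrite 1 [as_sum_range_C_mul_X_pow' f (Nat.lt_succ_of_le hf)]
  rw [sum_mul, map_sum, sum_range_succ, sum_eq_zero moment_lower, zero_add, mul_assoc,
    ← smul_eq_C_mul, map_smul, gammaMoment_X_pow_mul_monicLaguerre, Nat.descFactorial_self,
    smul_eq_mul, laguerreSqNorm]

lemma gammaMoment_monicLaguerre_mul_monicLaguerre (a : R) (j k : ℕ) :
    gammaMoment (a + 1) (monicLaguerre a j * monicLaguerre a k) =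
      if j = k then laguerreSqNorm a k else 0 := by
  wlog hjk : j ≤ k generalizing j k
  · rw [mul_comm, this k j (by lia), if_neg (by lia), if_neg (by lia)]
  rw [gammaMoment_mul_monicLaguerre_of_natDegree_le a
    ((natDegree_monicLaguerre_le a j).trans hjk)]
  split_ifs with h
  · rw [h, coeff_monicLaguerre_self, one_mul]
  · rw [coeff_eq_zero_of_natDegree_lt
      ((natDegree_monicLaguerre_le a j).trans_lt (lt_of_le_of_ne hjk h)), zero_mul]

/-- The `β = 4` skew inner product for the weight `x^(a+1) e^(-x)` as a bilinear form on
polynomials, normalised without the factor `Γ(a + 1) / 2`. The extra factor `X` lets it be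
expressed by the same functional `gammaMoment (a + 1)` that makes `monicLaguerre a` orthogonal. -/
noncomputable def laguerreSkewForm (a : R) : LinearMap.BilinForm R R[X] :=
  LinearMap.mk₂ R
    (fun f g => gammaMoment (a + 1) (X * (f * derivative g - derivative f * g)))
    (fun f₁ f₂ g => by rw [← map_add, derivative_add]; congr 1; ring)
    (fun c f g => by
      rw [← map_smul, derivative_smul]; simp only [smul_eq_C_mul]; congr 1; ring)
    (fun f g₁ g₂ => by rw [← map_add, derivative_add]; congr 1; ring)
    (fun c f g => by
      rw [← map_smul, derivative_smul]; simp only [smul_eq_C_mul]; congr 1; ring)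

lemma laguerreSkewForm_apply (a : R) (f g : R[X]) :
    laguerreSkewForm a f g =
      gammaMoment (a + 1) (X * (f * derivative g - derivative f * g)) := rfl

lemma laguerreSkewForm_monicLaguerre (a : R) (j k : ℕ) :
    laguerreSkewForm a (monicLaguerre a j) (monicLaguerre a k) =
      (if j + 1 = k then laguerreSqNorm a k else 0) -
        (if j = k + 1 then laguerreSqNorm a j else 0) := by
  have lowering_left :=
    gammaMoment_X_mul_derivative_mul_monicLaguerre a (monicLaguerre a j) k
  have lowering_right :=
    gammaMoment_X_mul_derivative_mul_monicLaguerre a (monicLaguerre a k) j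
  have expand : X * (monicLaguerre a j * derivative (monicLaguerre a k) -
        derivative (monicLaguerre a j) * monicLaguerre a k) =
      X * derivative (monicLaguerre a k) * monicLaguerre a j -
        X * derivative (monicLaguerre a j) * monicLaguerre a k := by ring
  rw [laguerreSkewForm_apply, expand, map_sub, lowering_left, lowering_right]
  simp only [gammaMoment_monicLaguerre_mul_monicLaguerre]
  split_ifs <;> first | lia | (subst_vars; ring)

/-- The even skew orthogonal polynomials `q̃_{2m}`, defined by their two-term recurrence to avoid
dividing by Gamma values. -/
noncomputable def evenSkewLaguerre (a : R) : ℕ → R[X]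
  | 0 => monicLaguerre a 0
  | m + 1 => monicLaguerre a (2 * m + 2) +
      ((2 * m + 2) * (2 * m + 2 + a)) • evenSkewLaguerre a m

lemma laguerreSkewForm_monicLaguerre_even (a : R) (i j : ℕ) :
    laguerreSkewForm a (monicLaguerre a (2 * i)) (monicLaguerre a (2 * j)) = 0 := by
  rw [laguerreSkewForm_monicLaguerre, if_neg (by lia), if_neg (by lia), sub_zero]

lemma laguerreSkewForm_monicLaguerre_odd (a : R) (m n : ℕ) :
    laguerreSkewForm a (monicLaguerre a (2 * m + 1)) (monicLaguerre a (2 * n + 1)) = 0 := by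
  rw [laguerreSkewForm_monicLaguerre, if_neg (by lia), if_neg (by lia), sub_zero]

lemma laguerreSkewForm_evenSkewLaguerre_monicLaguerre_even (a : R) (m j : ℕ) :
    laguerreSkewForm a (evenSkewLaguerre a m) (monicLaguerre a (2 * j)) = 0 := by
  induction m with
  | zero => exact laguerreSkewForm_monicLaguerre_even a 0 j
  | succ m ih =>
    rw [evenSkewLaguerre, LinearMap.map_add₂, LinearMap.map_smul₂, ih, smul_zero, add_zero]
    exact laguerreSkewForm_monicLaguerre_even a (m + 1) j

lemma laguerreSkewForm_evenSkewLaguerre (a : R) (m n : ℕ) :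
    laguerreSkewForm a (evenSkewLaguerre a m) (evenSkewLaguerre a n) = 0 := by
  induction n with
  | zero => exact laguerreSkewForm_evenSkewLaguerre_monicLaguerre_even a m 0
  | succ n ih =>
    rw [evenSkewLaguerre, map_add, map_smul, ih, smul_zero, add_zero]
    exact laguerreSkewForm_evenSkewLaguerre_monicLaguerre_even a m (n + 1)

lemma laguerreSkewForm_evenSkewLaguerre_monicLaguerre_odd (a : R) (m n : ℕ) :
    laguerreSkewForm a (evenSkewLaguerre a m) (monicLaguerre a (2 * n + 1)) =
      if m = n then laguerreSqNorm a (2 * n + 1) else 0 := by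
  induction m with
  | zero =>
    rw [evenSkewLaguerre, laguerreSkewForm_monicLaguerre, if_neg (by lia : 0 ≠ 2 * n + 1 + 1),
      sub_zero]
    exact if_congr (by lia) rfl rfl
  | succ m ih =>
    have sqNorm_ratio : laguerreSqNorm a (2 * m + 2) =
        (2 * m + 2) * (2 * m + 2 + a) * laguerreSqNorm a (2 * m + 1) := by
      rw [laguerreSqNorm_succ]
      push_cast
      ring
    rw [evenSkewLaguerre, LinearMap.map_add₂, LinearMap.map_smul₂, ih,
      laguerreSkewForm_monicLaguerre, sqNorm_ratio]
    split_ifs <;> first | lia | (subst_vars; simp)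

end Algebraic

section Real

lemma Gamma_mul_ascPochhammer {s : ℝ} (hs : ∀ k : ℕ, s ≠ -k) (n : ℕ) :
    Real.Gamma s * (ascPochhammer ℝ n).eval s = Real.Gamma (s + n) := by
  induction n with
  | zero => simp
  | succ n ih =>
    have s_add_ne_zero : s + n ≠ 0 := fun h => hs n (eq_neg_of_add_eq_zero_left h)
    rw [ascPochhammer_succ_eval, ← mul_assoc, ih, Nat.cast_succ, ← add_assoc,
      Real.Gamma_add_one s_add_ne_zero, mul_comm]

lemma rpow_mul_exp_neg_mul_eval_monomial (s c : ℝ) (k : ℕ) {x : ℝ} (hx : 0 < x) :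
    x ^ (s - 1) * Real.exp (-x) * (monomial k c).eval x =
      c * (Real.exp (-x) * x ^ (s + k - 1)) := by
  rw [eval_monomial, add_sub_right_comm, Real.rpow_add hx, Real.rpow_natCast]
  ring

lemma integrableOn_rpow_mul_exp_neg_mul_eval {s : ℝ} (hs : 0 < s) (f : ℝ[X]) :
    IntegrableOn (fun x => x ^ (s - 1) * Real.exp (-x) * f.eval x) (Set.Ioi 0) := by
  induction f using Polynomial.induction_on' with
  | add f g hf hg => simpa only [eval_add, mul_add] using! hf.add hg
  | monomial k c =>
    exact IntegrableOn.congr_fun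
      ((Real.GammaIntegral_convergent (by positivity : 0 < s + k)).const_mul c)
      (fun x hx => (rpow_mul_exp_neg_mul_eval_monomial s c k hx).symm) measurableSet_Ioi

lemma integral_rpow_mul_exp_neg_mul_eval {s : ℝ} (hs : 0 < s) (f : ℝ[X]) :
    ∫ x in Set.Ioi (0 : ℝ), x ^ (s - 1) * Real.exp (-x) * f.eval x =
      Real.Gamma s * gammaMoment s f := by
  induction f using Polynomial.induction_on' with
  | add f g hf hg =>
    simp only [eval_add, mul_add, map_add]
    rw [integral_add (integrableOn_rpow_mul_exp_neg_mul_eval hs f)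
      (integrableOn_rpow_mul_exp_neg_mul_eval hs g), hf, hg]
  | monomial k c =>
    have s_ne_neg (i : ℕ) : s ≠ -i := by
      linarith [(Nat.cast_nonneg i : (0 : ℝ) ≤ i)]
    rw [setIntegral_congr_fun measurableSet_Ioi
        (fun x hx => rpow_mul_exp_neg_mul_eval_monomial s c k hx), integral_const_mul,
      ← Real.Gamma_eq_integral (by positivity : 0 < s + k), ← Gamma_mul_ascPochhammer s_ne_neg,
      gammaMoment_monomial]
    ring

lemma sip4L_eval_eq_laguerreSkewForm {a : ℝ} (ha : -2 < a) (ha' : a ≠ -1) (f g : ℝ[X]) :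
    sip4L a (fun x => f.eval x) (fun x => g.eval x) =
      1 / 2 * Real.Gamma (a + 1) * laguerreSkewForm a f g := by
  have integral_eq := integral_rpow_mul_exp_neg_mul_eval (by linarith : 0 < a + 1 + 1)
    (f * derivative g - derivative f * g)
  have Gamma_succ : Real.Gamma (a + 1 + 1) = (a + 1) * Real.Gamma (a + 1) :=
    Real.Gamma_add_one fun h => ha' (eq_neg_of_add_eq_zero_left h)
  simp only [add_sub_cancel_right, eval_sub, eval_mul] at integral_eq
  simp only [sip4L, Polynomial.deriv]
  rw [integral_eq, Gamma_succ, laguerreSkewForm_apply, gammaMoment_X_mul]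
  ring

/-- The normalising constant `2^{2m} m! Γ(a/2 + m + 1)` of `q̃_{2m}`. -/
noncomputable def skewLaguerreConst (a : ℝ) (m : ℕ) : ℝ :=
  2 ^ (2 * m) * m.factorial * Real.Gamma (a / 2 + m + 1)

variable {a : ℝ} (ha : ∀ k : ℕ, a + 1 ≠ -k)

include ha

lemma coeff_monicLaguerre_eq_Gamma_div (n k : ℕ) :
    (monicLaguerre a n).coeff k =
      (-1) ^ (n + k) * n.choose k * (Real.Gamma (n + a + 1) / Real.Gamma (k + a + 1)) := by
  have Gamma_shift (i : ℕ) : Real.Gamma (i + a + 1) =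
      Real.Gamma (a + 1) * (ascPochhammer ℝ i).eval (a + 1) := by
    rw [Gamma_mul_ascPochhammer ha, add_assoc, add_comm]
  have Gamma_ne_zero : Real.Gamma (k + a + 1) ≠ 0 := Real.Gamma_ne_zero fun i h =>
    ha (k + i) (by push_cast; linarith)
  rw [← mul_div_assoc, eq_div_iff Gamma_ne_zero, Gamma_shift, Gamma_shift]
  linear_combination Real.Gamma (a + 1) * coeff_monicLaguerre_mul_ascPochhammer a n k

lemma laguerreP_eq_eval_monicLaguerre (n : ℕ) (x : ℝ) :
    laguerreP a n x = (monicLaguerre a n).eval x := by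
  rw [eval_eq_sum_range' (Nat.lt_succ_of_le (natDegree_monicLaguerre_le a n)), laguerreP,
    laguerreL, mul_sum]
  refine sum_congr rfl fun k hk => ?_
  rw [coeff_monicLaguerre_eq_Gamma_div ha, Nat.cast_choose ℝ (mem_range_succ_iff.mp hk), pow_add]
  field_simp

lemma skewLaguerreConst_ne_zero (m : ℕ) : skewLaguerreConst a m ≠ 0 := by
  have Gamma_ne_zero : Real.Gamma (a / 2 + m + 1) ≠ 0 := Real.Gamma_ne_zero fun i h =>
    ha (2 * m + 2 * i + 1) (by push_cast; linarith)
  rw [skewLaguerreConst]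
  positivity

lemma skewLaguerreConst_succ (m : ℕ) :
    skewLaguerreConst a (m + 1) = (2 * m + 2) * (2 * m + 2 + a) * skewLaguerreConst a m := by
  have arg_ne_zero : a / 2 + m + 1 ≠ 0 := fun h =>
    ha (2 * m + 1) (by push_cast; linarith)
  rw [skewLaguerreConst, skewLaguerreConst, Nat.cast_succ, ← add_assoc,
    Real.Gamma_add_one arg_ne_zero, Nat.factorial_succ]
  push_cast
  ring

lemma qLSE_even_eq_eval_evenSkewLaguerre (m : ℕ) :
    qLSE a (2 * m) = fun x => (evenSkewLaguerre a m).eval x := by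
  funext x
  have qLSE_even : ∀ i, qLSE a (2 * i) x = skewLaguerreConst a i *
      ∑ j ∈ range (i + 1), (monicLaguerre a (2 * j)).eval x / skewLaguerreConst a j := fun i => by
    simp [qLSE, skewLaguerreConst, laguerreP_eq_eval_monicLaguerre ha]
  induction m with
  | zero =>
    rw [qLSE_even, zero_add, sum_range_one, mul_div_cancel₀ _ (skewLaguerreConst_ne_zero ha 0)]
    rfl
  | succ m ih =>
    rw [evenSkewLaguerre, eval_add, eval_smul, smul_eq_mul, ← ih, qLSE_even, qLSE_even,
      sum_range_succ, mul_add, mul_div_cancel₀ _ (skewLaguerreConst_ne_zero ha (m + 1)),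
      skewLaguerreConst_succ ha, mul_add 2 m 1]
    ring

lemma qLSE_odd_eq_eval_monicLaguerre (m : ℕ) :
    qLSE a (2 * m + 1) = fun x => (monicLaguerre a (2 * m + 1)).eval x := by
  funext x
  rw [qLSE, if_pos (by lia), laguerreP_eq_eval_monicLaguerre ha]

lemma Gamma_mul_laguerreSqNorm (n : ℕ) :
    Real.Gamma (a + 1) * laguerreSqNorm a n = Real.Gamma (n + 1) * Real.Gamma (a + 1 + n) := by
  rw [← Gamma_mul_ascPochhammer ha, Real.Gamma_nat_eq_factorial, laguerreSqNorm]
  ring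

end Real

theorem laguerre_skew_orthogonal_beta4_general (a : ℝ) (ha : -2 < a) (ha' : a ≠ -1) (m n : ℕ) :
    sip4L a (qLSE a (2 * m)) (qLSE a (2 * n)) = 0 ∧
    sip4L a (qLSE a (2 * m + 1)) (qLSE a (2 * n + 1)) = 0 ∧
    (m ≠ n → sip4L a (qLSE a (2 * m)) (qLSE a (2 * n + 1)) = 0) ∧
    sip4L a (qLSE a (2 * m)) (qLSE a (2 * m + 1))
      = (1 / 2) * Real.Gamma (2 * (m : ℝ) + 2) * Real.Gamma (a + 2 * (m : ℝ) + 2) := by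
  have not_pole : ∀ k : ℕ, a + 1 ≠ -k := by
    rintro (_ | k) h
    · exact ha' (by simpa [eq_neg_iff_add_eq_zero] using h)
    · push_cast at h
      linarith [(Nat.cast_nonneg k : (0 : ℝ) ≤ k)]
  simp only [qLSE_even_eq_eval_evenSkewLaguerre not_pole, qLSE_odd_eq_eval_monicLaguerre not_pole,
    sip4L_eval_eq_laguerreSkewForm ha ha', laguerreSkewForm_evenSkewLaguerre,
    laguerreSkewForm_monicLaguerre_odd, laguerreSkewForm_evenSkewLaguerre_monicLaguerre_odd]
  refine ⟨mul_zero _, mul_zero _, fun hmn => by rw [if_neg hmn, mul_zero], ?_⟩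
  rw [if_pos trivial, mul_assoc, Gamma_mul_laguerreSqNorm not_pole, ← mul_assoc]
  push_cast
  ring_nf

/-- The family `{q̃_j}` is skew orthogonal for the β = 4 Laguerre skew inner product,
with normalizations `r̃_m = (1/2) Γ(2m+2) Γ(a+2m+2)`. -/
theorem laguerre_skew_orthogonal_beta4 (a : ℝ) (ha : -1 < a) (m n : ℕ) :
    sip4L a (qLSE a (2 * m)) (qLSE a (2 * n)) = 0 ∧
    sip4L a (qLSE a (2 * m + 1)) (qLSE a (2 * n + 1)) = 0 ∧
    (m ≠ n → sip4L a (qLSE a (2 * m)) (qLSE a (2 * n + 1)) = 0) ∧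
    sip4L a (qLSE a (2 * m)) (qLSE a (2 * m + 1))
      = (1 / 2) * Real.Gamma (2 * (m : ℝ) + 2) * Real.Gamma (a + 2 * (m : ℝ) + 2) :=
  laguerre_skew_orthogonal_beta4_general a (by linarith) ha.ne' m n
end

section
/- Let a, b > 0 be real. Define q̃_{2m}(x) = p_{2m}(x) and q̃_{2m+1}(x) = p_{2m+1}(x) − [8m(2m+a)(2m+b)(a+b+2m) / ((a+b+4m−1)(a+b+4m)(a+b+4m+1)(a+b+4m+2))]·p_{2m−1}(x) (with p_{−1} = 0), where p_k are the monic Jacobi polynomials with parameters a, b. Then the family {q̃_j} is skew orthogonal with respect to the β = 1 skew inner product with weight (1−x)^{(a−1)/2}(1+x)^{(b−1)/2} on (−1, 1): for all natural numbers m, n one has ⟨q̃_{2m}, q̃_{2n}⟩₁ = 0, ⟨q̃_{2m+1}, q̃_{2n+1}⟩₁ = 0, and ⟨q̃_{2m}, q̃_{2n+1}⟩₁ = 0 if m ≠ n, while ⟨q̃_{2m}, q̃_{2m+1}⟩₁ = 2^{a+b+4m+2} (2m)! Γ(a+2m+1)Γ(b+2m+1)Γ(a+b+2m+1) / (Γ(a+b+4m+1)Γ(a+b+4m+3)).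 -/
open MeasureTheory Finset

/-- The skew orthogonal candidates: `q̃_{2m} = p_{2m}`, and `q̃_{2m+1} = p_{2m+1} −
[8m(2m+a)(2m+b)(a+b+2m)/((a+b+4m−1)(a+b+4m)(a+b+4m+1)(a+b+4m+2))] p_{2m−1}`. -/
noncomputable def qJOE (a b : ℝ) (j : ℕ) (x : ℝ) : ℝ :=
  if j % 2 = 0 then jacobiMonic a b j x
  else jacobiMonic a b j x -
    (4 * ((j : ℝ) - 1) * (((j : ℝ) - 1) + a) * (((j : ℝ) - 1) + b) * (a + b + ((j : ℝ) - 1)) /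
      ((a + b + 2 * ((j : ℝ) - 1) - 1) * (a + b + 2 * ((j : ℝ) - 1)) *
        (a + b + 2 * ((j : ℝ) - 1) + 1) * (a + b + 2 * ((j : ℝ) - 1) + 2)))
      * jacobiMonic a b (j - 2) x

/-- The β = 1 skew inner product with weight `(1−x)^{(a−1)/2} (1+x)^{(b−1)/2}` on `(−1, 1)`. -/
noncomputable def sip1J (a b : ℝ) (f g : ℝ → ℝ) : ℝ :=
  (1 / 2) * ∫ x in Set.Ioo (-1 : ℝ) 1, ∫ y in Set.Ioo (-1 : ℝ) 1,
    ((1 - x) ^ ((a - 1) / 2) * (1 + x) ^ ((b - 1) / 2)) *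
    ((1 - y) ^ ((a - 1) / 2) * (1 + y) ^ ((b - 1) / 2)) *
      Real.sign (y - x) * f x * g y

open Polynomial ProbabilityTheory

/-!
Let `T` be given by `(w_{a+1,b+1} h)' = w_{a,b} T h`, where `w_{a,b}` is the Jacobi weight. Since
`w_{a,b}` is the product of `w_{(a-1)/2,(b-1)/2}` and `w_{(a+1)/2,(b+1)/2}`, the operator `D`
obtained from `T` at the parameters `((a-1)/2, (b-1)/2)` is antisymmetric for `∫ w_{a,b} f g`.
Moreover the kernel `sgn(y - x)` inverts the derivative, so `⟨f, D h⟩₁ = -∫ w_{a,b} f h`: on the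
range of `D` the skew product reduces to the Jacobi inner product. As `D` raises the degree by at
most one, antisymmetry makes `D p_k` a combination of `p_{k+1}` and `p_{k-1}` only, and `q̃_{2m+1}`
is precisely `D p_{2m}` made monic. The products with `q̃_{2n+1}` are then Jacobi inner products,
and those of two even members vanish by induction, `D p_{2n+1}` linking `p_{2n+2}` to `p_{2n}`.
-/

/-! ### The sign kernel -/

lemma measurable_realSign : Measurable Real.sign :=
  Measurable.ite measurableSet_Iio measurable_const
    (Measurable.ite measurableSet_Ioi measurable_const measurable_const)

lemma norm_realSign_le_one (r : ℝ) : ‖Real.sign r‖ ≤ 1 := by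
  rcases Real.sign_apply_eq r with h | h | h <;> simp [h]

/-- The bilinear form `∬ sgn(y - x) F(x) G(y) dμ(x) dμ(y)`; the `β = 1` skew inner product is half
of it, the weight being absorbed into `F` and `G`. -/
noncomputable def signForm (μ : Measure ℝ) (F G : ℝ → ℝ) : ℝ :=
  ∫ x, ∫ y, Real.sign (y - x) * (F x * G y) ∂μ ∂μ

section SignForm

variable {μ : Measure ℝ} {F G H : ℝ → ℝ}

lemma signForm_smul_right (r : ℝ) (F G : ℝ → ℝ) : signForm μ F (r • G) = r * signForm μ F G := by
  simp only [signForm, Pi.smul_apply, smul_eq_mul, mul_left_comm _ r, integral_const_mul]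

lemma integrable_sign_sub_mul (hF : Integrable F μ) (hG : Integrable G μ) :
    Integrable (fun z : ℝ × ℝ => Real.sign (z.2 - z.1) * (F z.1 * G z.2)) (μ.prod μ) :=
  (hF.mul_prod hG).bdd_mul (c := 1)
    (measurable_realSign.comp (measurable_snd.sub measurable_fst)).aestronglyMeasurable
    (.of_forall fun _ => norm_realSign_le_one _)

variable [SFinite μ]

lemma signForm_eq_integral_prod (hF : Integrable F μ) (hG : Integrable G μ) :
    signForm μ F G = ∫ z, Real.sign (z.2 - z.1) * (F z.1 * G z.2) ∂μ.prod μ :=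
  (integral_prod _ (integrable_sign_sub_mul hF hG)).symm

lemma signForm_swap (hF : Integrable F μ) (hG : Integrable G μ) :
    signForm μ G F = -signForm μ F G := by
  rw [signForm_eq_integral_prod hG hF, signForm_eq_integral_prod hF hG, ← integral_prod_swap,
    ← integral_neg]
  refine integral_congr_ae (.of_forall fun z => ?_)
  simp only [Prod.fst_swap, Prod.snd_swap]
  rw [← neg_sub, Real.sign_neg]
  ring

lemma signForm_add_right (hF : Integrable F μ) (hG : Integrable G μ) (hH : Integrable H μ) :
    signForm μ F (G + H) = signForm μ F G + signForm μ F H := by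
  rw [signForm_eq_integral_prod hF (hG.add hH), signForm_eq_integral_prod hF hG,
    signForm_eq_integral_prod hF hH,
    ← integral_add (integrable_sign_sub_mul hF hG) (integrable_sign_sub_mul hF hH)]
  simp only [Pi.add_apply, mul_add]

end SignForm

lemma integral_Ioo_eq_sub_of_hasDerivAt {α β : ℝ} {Φ φ : ℝ → ℝ} (hαβ : α ≤ β)
    (hcont : ContinuousOn Φ (Set.Icc α β)) (hderiv : ∀ y ∈ Set.Ioo α β, HasDerivAt Φ (φ y) y)
    (hint : IntegrableOn φ (Set.Ioo α β)) : ∫ y in Set.Ioo α β, φ y = Φ β - Φ α := by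
  rw [← integral_Ioc_eq_integral_Ioo, ← intervalIntegral.integral_of_le hαβ]
  exact intervalIntegral.integral_eq_sub_of_hasDerivAt_of_le hαβ hcont hderiv
    ((intervalIntegrable_iff_integrableOn_Ioo_of_le hαβ).2 hint)

lemma integral_sign_sub_mul_of_hasDerivAt {α β x : ℝ} {Φ φ : ℝ → ℝ}
    (hcont : ContinuousOn Φ (Set.Icc α β)) (hderiv : ∀ y ∈ Set.Ioo α β, HasDerivAt Φ (φ y) y)
    (hint : IntegrableOn φ (Set.Ioo α β)) (hα : Φ α = 0) (hβ : Φ β = 0)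
    (hx : x ∈ Set.Ioo α β) :
    ∫ y in Set.Ioo α β, Real.sign (y - x) * φ y = -2 * Φ x := by
  have ftc {u v : ℝ} (hu : α ≤ u) (huv : u ≤ v) (hv : v ≤ β) :
      ∫ y in Set.Ioo u v, φ y = Φ v - Φ u :=
    integral_Ioo_eq_sub_of_hasDerivAt huv (hcont.mono (Set.Icc_subset_Icc hu hv))
      (fun y hy => hderiv y (Set.Ioo_subset_Ioo hu hv hy))
      (hint.mono_set (Set.Ioo_subset_Ioo hu hv))
  have left : ∫ y in Set.Ioo α x, Real.sign (y - x) * φ y = -∫ y in Set.Ioo α x, φ y := by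
    rw [← integral_neg]
    refine setIntegral_congr_fun measurableSet_Ioo fun y hy => ?_
    simp only [Real.sign_of_neg (sub_neg.2 hy.2), neg_mul, one_mul]
  have right : ∫ y in Set.Ioo x β, Real.sign (y - x) * φ y = ∫ y in Set.Ioo x β, φ y :=
    setIntegral_congr_fun measurableSet_Ioo fun y hy => by
      simp only [Real.sign_of_pos (sub_pos.2 hy.1), one_mul]
  have hsign : IntegrableOn (fun y => Real.sign (y - x) * φ y) (Set.Ioo α β) :=
    hint.bdd_mul (c := 1)
      (measurable_realSign.comp (measurable_id.sub_const x)).aestronglyMeasurable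
      (.of_forall fun _ => norm_realSign_le_one _)
  have split : Set.Ioo α β = Set.Ioc α x ∪ Set.Ioo x β :=
    (Set.Ioc_union_Ioo_eq_Ioo hx.1.le hx.2).symm
  have disjoint : Disjoint (Set.Ioc α x) (Set.Ioo x β) :=
    Set.disjoint_left.2 fun y h₁ h₂ => h₁.2.not_gt h₂.1
  rw [split] at hsign ⊢
  rw [setIntegral_union disjoint measurableSet_Ioo hsign.left_of_union hsign.right_of_union,
    integral_Ioc_eq_integral_Ioo, left, right, ftc le_rfl hx.1.le hx.2.le,
    ftc hx.1.le hx.2.le le_rfl, hα, hβ]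
  ring

/-! ### The Jacobi weight -/

/-- The Jacobi weight `(1 - x)^a (1 + x)^b`. -/
noncomputable def jacobiWeight (a b x : ℝ) : ℝ := (1 - x) ^ a * (1 + x) ^ b

lemma betaPDFReal_nonneg {α β : ℝ} (hα : 0 < α) (hβ : 0 < β) (x : ℝ) : 0 ≤ betaPDFReal α β x := by
  by_cases hx : 0 < x ∧ x < 1
  · exact (betaPDFReal_pos hx.1 hx.2 hα hβ).le
  · rw [betaPDFReal, if_neg hx]

lemma integrable_betaPDFReal {α β : ℝ} (hα : 0 < α) (hβ : 0 < β) :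
    Integrable (betaPDFReal α β) := by
  refine ⟨(measurable_betaPDFReal α β).aestronglyMeasurable, ?_⟩
  rw [hasFiniteIntegral_iff_ofReal (.of_forall (betaPDFReal_nonneg hα hβ))]
  exact (lintegral_betaPDF_eq_one hα hβ).trans_lt ENNReal.one_lt_top

lemma integral_betaPDFReal {α β : ℝ} (hα : 0 < α) (hβ : 0 < β) : ∫ x, betaPDFReal α β x = 1 := by
  rw [integral_eq_lintegral_of_nonneg_ae (.of_forall (betaPDFReal_nonneg hα hβ))
    (measurable_betaPDFReal α β).aestronglyMeasurable]
  exact congrArg ENNReal.toReal (lintegral_betaPDF_eq_one hα hβ)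

section JacobiWeight

variable {a b : ℝ}

lemma jacobiWeight_mul {x : ℝ} (hx : x ∈ Set.Ioo (-1 : ℝ) 1) (a b c d : ℝ) :
    jacobiWeight a b x * jacobiWeight c d x = jacobiWeight (a + c) (b + d) x := by
  simp only [jacobiWeight]
  rw [Real.rpow_add (by linarith [hx.2]), Real.rpow_add (by linarith [hx.1])]
  ring

lemma jacobiWeight_add_one {x : ℝ} (hx : x ∈ Set.Ioo (-1 : ℝ) 1) (a b : ℝ) :
    jacobiWeight (a + 1) (b + 1) x = (1 - x ^ 2) * jacobiWeight a b x := by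
  rw [← jacobiWeight_mul hx, mul_comm]
  simp only [jacobiWeight, Real.rpow_one]
  ring

lemma indicator_jacobiWeight (ha : -1 < a) (hb : -1 < b) :
    (Set.Ioo (-1) 1).indicator (jacobiWeight a b) = fun x =>
      2 ^ (a + b) * beta (b + 1) (a + 1) * betaPDFReal (b + 1) (a + 1) ((x + 1) / 2) := by
  ext x
  by_cases hx : x ∈ Set.Ioo (-1 : ℝ) 1
  · have hbeta := (beta_pos (α := b + 1) (β := a + 1) (by linarith) (by linarith)).ne'
    rw [Set.indicator_of_mem hx, jacobiWeight, betaPDFReal,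
      if_pos ⟨by linarith [hx.1], by linarith [hx.2]⟩,
      show 1 - x = 2 * (1 - (x + 1) / 2) by ring,
      show 1 + x = 2 * ((x + 1) / 2) by ring,
      Real.mul_rpow zero_le_two (by linarith [hx.2]),
      Real.mul_rpow zero_le_two (by linarith [hx.1]), Real.rpow_add zero_lt_two,
      add_sub_cancel_right, add_sub_cancel_right]
    field_simp
  · have hx' : ¬(0 < (x + 1) / 2 ∧ (x + 1) / 2 < 1) :=
      fun h => hx ⟨by linarith [h.1], by linarith [h.2]⟩
    rw [Set.indicator_of_notMem hx, betaPDFReal, if_neg hx', mul_zero]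

lemma integrableOn_jacobiWeight (ha : -1 < a) (hb : -1 < b) :
    IntegrableOn (jacobiWeight a b) (Set.Ioo (-1) 1) := by
  rw [← integrable_indicator_iff measurableSet_Ioo, indicator_jacobiWeight ha hb]
  have hbeta := integrable_betaPDFReal (α := b + 1) (β := a + 1) (by linarith) (by linarith)
  exact ((hbeta.comp_div two_ne_zero).comp_add_right 1).const_mul _

lemma integral_jacobiWeight (ha : -1 < a) (hb : -1 < b) :
    ∫ x in Set.Ioo (-1) 1, jacobiWeight a b x = 2 ^ (a + b + 1) * beta (b + 1) (a + 1) := by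
  rw [← integral_indicator measurableSet_Ioo, indicator_jacobiWeight ha hb, integral_const_mul,
    integral_add_right_eq_self (fun x => betaPDFReal (b + 1) (a + 1) (x / 2)) 1,
    Measure.integral_comp_div, integral_betaPDFReal (by linarith) (by linarith),
    Real.rpow_add_one two_ne_zero]
  norm_num
  ring

lemma integrableOn_jacobiWeight_mul_eval (ha : -1 < a) (hb : -1 < b) (p : ℝ[X]) :
    IntegrableOn (fun x => jacobiWeight a b x * p.eval x) (Set.Ioo (-1) 1) := by
  obtain ⟨M, hM⟩ := isCompact_Icc.exists_bound_of_continuousOn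
    (p.continuous.continuousOn (s := Set.Icc (-1 : ℝ) 1))
  refine (integrableOn_jacobiWeight ha hb).mul_bdd (c := M) p.continuous.aestronglyMeasurable ?_
  filter_upwards [ae_restrict_mem measurableSet_Ioo] with x hx
  exact hM x (Set.Ioo_subset_Icc_self hx)

lemma continuousOn_jacobiWeight (ha : 0 ≤ a) (hb : 0 ≤ b) (s : Set ℝ) :
    ContinuousOn (jacobiWeight a b) s :=
  (((continuous_const.sub continuous_id).rpow_const fun _ => .inr ha).mul
    ((continuous_const.add continuous_id).rpow_const fun _ => .inr hb)).continuousOn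

lemma jacobiWeight_one (ha : a ≠ 0) (b : ℝ) : jacobiWeight a b 1 = 0 := by
  simp [jacobiWeight, Real.zero_rpow ha]

lemma jacobiWeight_neg_one (a : ℝ) (hb : b ≠ 0) : jacobiWeight a b (-1) = 0 := by
  simp [jacobiWeight, Real.zero_rpow hb]

end JacobiWeight

/-! ### The raising operator -/

/-- The operator `T` with `d/dx ((1 - x)^(a+1) (1 + x)^(b+1) h) = (1 - x)^a (1 + x)^b T h`; it sends
Jacobi polynomials with parameters `(a + 1, b + 1)` to Jacobi polynomials with parameters `(a, b)`
of one degree more. -/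
noncomputable def jacobiRaise (a b : ℝ) : ℝ[X] →ₗ[ℝ] ℝ[X] :=
  LinearMap.mulLeft ℝ (1 - X ^ 2) ∘ₗ derivative +
    LinearMap.mulLeft ℝ (C (b - a) - C (a + b + 2) * X)

section JacobiRaise

variable {a b : ℝ} {h : ℝ[X]} {n : ℕ}

lemma jacobiRaise_apply (a b : ℝ) (h : ℝ[X]) :
    jacobiRaise a b h = (1 - X ^ 2) * derivative h + (C (b - a) - C (a + b + 2) * X) * h :=
  rfl

lemma hasDerivAt_jacobiWeight_mul_eval (a b : ℝ) (h : ℝ[X]) {x : ℝ}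
    (hx : x ∈ Set.Ioo (-1 : ℝ) 1) :
    HasDerivAt (fun x => jacobiWeight (a + 1) (b + 1) x * h.eval x)
      (jacobiWeight a b x * (jacobiRaise a b h).eval x) x := by
  have hsub : 1 - x ≠ 0 := by linarith [hx.2]
  have hadd : 1 + x ≠ 0 := by linarith [hx.1]
  have dsub := ((hasDerivAt_id x).const_sub 1).rpow_const (p := a + 1) (.inl hsub)
  have dadd := ((hasDerivAt_id x).const_add 1).rpow_const (p := b + 1) (.inl hadd)
  refine ((dsub.mul dadd).mul (h.hasDerivAt x)).congr_deriv ?_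
  simp only [jacobiWeight, jacobiRaise_apply, id, Pi.mul_apply, add_sub_cancel_right, eval_add,
    eval_mul, eval_sub, eval_one, eval_pow, eval_X, eval_C, Real.rpow_add_one hsub,
    Real.rpow_add_one hadd]
  ring

lemma jacobiRaise_mul (a b c d : ℝ) (g h : ℝ[X]) :
    jacobiRaise (a + c + 1) (b + d + 1) (g * h) =
      jacobiRaise a b g * h + g * jacobiRaise c d h := by
  simp only [jacobiRaise_apply, derivative_mul, map_add, map_sub, map_one]
  simp only [map_ofNat]
  ring

lemma coeff_jacobiRaise_succ (a b : ℝ) (h : ℝ[X]) (n : ℕ) :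
    (jacobiRaise a b h).coeff (n + 1) =
      (n + 2) * h.coeff (n + 2) + (b - a) * h.coeff (n + 1) - (n + a + b + 2) * h.coeff n := by
  have coeff_X_mul_derivative : (X * derivative h).coeff n = n * h.coeff n := by
    cases n with
    | zero => simp
    | succ n => rw [coeff_X_mul, coeff_derivative]; push_cast; ring
  have expand : jacobiRaise a b h = derivative h - X * (X * derivative h) + C (b - a) * h
      - C (a + b + 2) * (X * h) := by rw [jacobiRaise_apply]; ring
  rw [expand, coeff_sub, coeff_add, coeff_sub, coeff_X_mul, coeff_X_mul_derivative, coeff_C_mul,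
    coeff_C_mul, coeff_X_mul, coeff_derivative]
  push_cast
  ring

lemma natDegree_jacobiRaise_le (a b : ℝ) (hh : h.natDegree ≤ n) :
    (jacobiRaise a b h).natDegree ≤ n + 1 := by
  rw [natDegree_le_iff_coeff_eq_zero] at hh ⊢
  rintro (_ | k) hk
  · omega
  · rw [coeff_jacobiRaise_succ, hh k (by omega), hh (k + 1) (by omega), hh (k + 2) (by omega)]
    ring

lemma coeff_jacobiRaise_of_natDegree_le (a b : ℝ) (hh : h.natDegree ≤ n) :
    (jacobiRaise a b h).coeff (n + 1) = -(n + a + b + 2) * h.coeff n := by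
  rw [coeff_jacobiRaise_succ, coeff_eq_zero_of_natDegree_lt (by omega : h.natDegree < n + 2),
    coeff_eq_zero_of_natDegree_lt (by omega : h.natDegree < n + 1)]
  ring

end JacobiRaise

/-! ### The moment functional -/

/-- The functional `f ↦ ∫_{-1}^{1} (1 - x)^a (1 + x)^b f(x) dx` on polynomials. -/
noncomputable def jacobiMoment (a b : ℝ) (f : ℝ[X]) : ℝ :=
  ∫ x in Set.Ioo (-1) 1, jacobiWeight a b x * f.eval x

section JacobiMoment

variable {a b : ℝ}

lemma jacobiMoment_add (ha : -1 < a) (hb : -1 < b) (f g : ℝ[X]) :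
    jacobiMoment a b (f + g) = jacobiMoment a b f + jacobiMoment a b g := by
  simp only [jacobiMoment, eval_add, mul_add]
  exact integral_add (integrableOn_jacobiWeight_mul_eval ha hb f)
    (integrableOn_jacobiWeight_mul_eval ha hb g)

lemma jacobiMoment_smul (a b r : ℝ) (f : ℝ[X]) :
    jacobiMoment a b (r • f) = r * jacobiMoment a b f := by
  simp only [jacobiMoment, eval_smul, smul_eq_mul, mul_left_comm _ r, integral_const_mul]

lemma jacobiMoment_sub (ha : -1 < a) (hb : -1 < b) (f g : ℝ[X]) :
    jacobiMoment a b (f - g) = jacobiMoment a b f - jacobiMoment a b g := by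
  rw [sub_eq_add_neg, ← neg_one_smul ℝ g, jacobiMoment_add ha hb, jacobiMoment_smul]
  ring

lemma jacobiMoment_one (ha : -1 < a) (hb : -1 < b) :
    jacobiMoment a b 1 = 2 ^ (a + b + 1) * beta (b + 1) (a + 1) := by
  simp only [jacobiMoment, eval_one, mul_one, integral_jacobiWeight ha hb]

lemma jacobiMoment_add_one (a b : ℝ) (f : ℝ[X]) :
    jacobiMoment (a + 1) (b + 1) f = jacobiMoment a b ((1 - X ^ 2) * f) := by
  refine setIntegral_congr_fun measurableSet_Ioo fun x hx => ?_
  simp only [jacobiWeight_add_one hx, eval_mul, eval_sub, eval_one, eval_pow, eval_X]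
  ring

lemma jacobiMoment_jacobiRaise (ha : -1 < a) (hb : -1 < b) (h : ℝ[X]) :
    jacobiMoment a b (jacobiRaise a b h) = 0 := by
  rw [jacobiMoment, integral_Ioo_eq_sub_of_hasDerivAt (by norm_num)
    ((continuousOn_jacobiWeight (by linarith) (by linarith) _).mul h.continuousOn)
    (fun x hx => hasDerivAt_jacobiWeight_mul_eval a b h hx)
    (integrableOn_jacobiWeight_mul_eval ha hb _)]
  simp only [Pi.mul_apply, jacobiWeight_one (by linarith : a + 1 ≠ 0),
    jacobiWeight_neg_one _ (by linarith : b + 1 ≠ 0), zero_mul, sub_zero]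

lemma jacobiMoment_jacobiRaise_mul (ha : -1 < a) (hb : -1 < b) (g f : ℝ[X]) :
    jacobiMoment a b (jacobiRaise a b g * f) =
      -jacobiMoment (a + 1) (b + 1) (g * derivative f) := by
  have leibniz : jacobiRaise a b (g * f) =
      jacobiRaise a b g * f + (1 - X ^ 2) * (g * derivative f) := by
    simp only [jacobiRaise_apply, derivative_mul]
    ring
  have total := jacobiMoment_jacobiRaise ha hb (g * f)
  rw [leibniz, jacobiMoment_add ha hb, ← jacobiMoment_add_one] at total
  linarith

end JacobiMoment

/-! ### Jacobi polynomials -/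

/-- `((X - 1)/2)^s ((X + 1)/2)^t`, the basis in which Jacobi polynomials are explicit. -/
noncomputable def jacobiBasis (s t : ℕ) : ℝ[X] :=
  (C (1 / 2) * (X - 1)) ^ s * (C (1 / 2) * (X + 1)) ^ t

/-- The coefficient of `jacobiBasis s t` in the Jacobi polynomial of degree `s + t`. -/
noncomputable def jacobiCoeff (a b : ℝ) (s t : ℕ) : ℝ :=
  Real.Gamma (s + t + a + 1) / (Real.Gamma (a + s + 1) * t.factorial) *
    (Real.Gamma (s + t + b + 1) / (Real.Gamma (t + b + 1) * s.factorial))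

/-- The Jacobi polynomial `P_n^{(a,b)}` as an element of `ℝ[X]`. -/
noncomputable def jacobiPoly (a b : ℝ) (n : ℕ) : ℝ[X] :=
  ∑ p ∈ antidiagonal n, jacobiCoeff a b p.1 p.2 • jacobiBasis p.1 p.2

/-- The monic Jacobi polynomial. Its normalization is written with a Pochhammer symbol in place of
the quotient `Γ(a+b+2n+1)/Γ(a+b+n+1)`, which is `0/0` at `n = 0`, `a + b = -1`. -/
noncomputable def monicJacobi (a b : ℝ) (n : ℕ) : ℝ[X] :=
  (2 ^ n * n.factorial / (ascPochhammer ℝ n).eval (a + b + n + 1)) • jacobiPoly a b n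

lemma gamma_add_natCast {s : ℝ} (hs : ∀ k : ℕ, s ≠ -k) (n : ℕ) :
    Real.Gamma (s + n) = (ascPochhammer ℝ n).eval s * Real.Gamma s := by
  induction n with
  | zero => simp
  | succ n ih =>
    rw [Nat.cast_succ, ← add_assoc, Real.Gamma_add_one fun h => hs n (eq_neg_of_add_eq_zero_left h),
      ih, ascPochhammer_succ_eval]
    ring

lemma ascPochhammer_eval_succ_left (n : ℕ) (x : ℝ) :
    (ascPochhammer ℝ (n + 1)).eval x = x * (ascPochhammer ℝ n).eval (x + 1) := by
  simp [ascPochhammer_succ_left]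

lemma sum_antidiagonal_succ_natCast_mul {R : Type*} [CommRing R] (f : ℕ → ℕ → R) (n : ℕ) :
    (n + 1) * ∑ p ∈ antidiagonal (n + 1), f p.1 p.2 =
      ∑ p ∈ antidiagonal n, ((p.2 + 1) * f p.1 (p.2 + 1) + (p.1 + 1) * f (p.1 + 1) p.2) := by
  have weights : (n + 1 : R) * ∑ p ∈ antidiagonal (n + 1), f p.1 p.2 =
      ∑ p ∈ antidiagonal (n + 1), (p.2 * f p.1 p.2) +
        ∑ p ∈ antidiagonal (n + 1), (p.1 * f p.1 p.2) := by
    rw [mul_sum, ← sum_add_distrib]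
    refine sum_congr rfl fun p hp => ?_
    rw [← Nat.cast_succ, Nat.succ_eq_add_one, ← mem_antidiagonal.1 hp]
    push_cast
    ring
  rw [weights, Finset.Nat.sum_antidiagonal_succ', Finset.Nat.sum_antidiagonal_succ,
    sum_add_distrib]
  push_cast
  ring

section JacobiPolynomials

variable {a b : ℝ}

lemma jacobiCoeff_add_one_mul_left (ha : -1 < a) (b : ℝ) (s t : ℕ) :
    jacobiCoeff (a + 1) (b + 1) s t * (s + a + 1) = (t + 1) * jacobiCoeff a b s (t + 1) := by
  have hs : 0 < a + s + 1 := by linarith [s.cast_nonneg (α := ℝ)]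
  have ht : (t : ℝ) + 1 ≠ 0 := by positivity
  have hΓ := (Real.Gamma_pos_of_pos hs).ne'
  have hs' := hs.ne'
  simp only [jacobiCoeff, Nat.factorial_succ, Nat.cast_mul, Nat.cast_succ]
  rw [show a + 1 + s + 1 = a + s + 1 + 1 by ring, Real.Gamma_add_one hs',
    show s + t + (a + 1) + 1 = s + (t + 1) + a + 1 by ring,
    show s + t + (b + 1) + 1 = s + (t + 1) + b + 1 by ring,
    show t + (b + 1) + 1 = t + 1 + b + 1 by ring]
  field_simp
  ring

lemma jacobiCoeff_swap (a b : ℝ) (s t : ℕ) : jacobiCoeff a b s t = jacobiCoeff b a t s := by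
  simp only [jacobiCoeff, add_comm (t : ℝ) s, add_comm (t : ℝ) b, add_comm a (s : ℝ)]
  ring

lemma jacobiCoeff_add_one_mul_right (a : ℝ) (hb : -1 < b) (s t : ℕ) :
    jacobiCoeff (a + 1) (b + 1) s t * (t + b + 1) = (s + 1) * jacobiCoeff a b (s + 1) t := by
  rw [jacobiCoeff_swap, jacobiCoeff_add_one_mul_left hb, jacobiCoeff_swap]

lemma jacobiRaise_jacobiBasis (a b : ℝ) (s t : ℕ) :
    jacobiRaise a b (jacobiBasis s t) =
      (-2 * (s + a + 1)) • jacobiBasis s (t + 1) + (-2 * (t + b + 1)) • jacobiBasis (s + 1) t := by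
  have natCast_mul_pow_pred_mul (n : ℕ) (y : ℝ) : n * y ^ (n - 1) * y = n * y ^ n := by
    cases n with
    | zero => simp
    | succ n => rw [Nat.add_sub_cancel, pow_succ, mul_assoc]
  refine Polynomial.funext fun x => ?_
  have hs := natCast_mul_pow_pred_mul s (1 / 2 * (x - 1))
  have ht := natCast_mul_pow_pred_mul t (1 / 2 * (x + 1))
  simp only [jacobiRaise_apply, jacobiBasis, derivative_mul, derivative_pow, derivative_C,
    derivative_sub, derivative_add, derivative_X, derivative_one, eval_mul, eval_C, eval_pow,
    eval_sub, eval_add, eval_X, eval_one, eval_zero, eval_smul, smul_eq_mul]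
  linear_combination (-2 * (1 / 2 * (x + 1)) ^ (t + 1)) * hs - 2 * (1 / 2 * (x - 1)) ^ (s + 1) * ht

lemma jacobiRaise_jacobiPoly (ha : -1 < a) (hb : -1 < b) (n : ℕ) :
    jacobiRaise a b (jacobiPoly (a + 1) (b + 1) n) =
      (-2 * (n + 1) : ℝ) • jacobiPoly a b (n + 1) := by
  have reindex := sum_antidiagonal_succ_natCast_mul
    (fun s t => jacobiCoeff a b s t • jacobiBasis s t) n
  have scalar : (-2 * (n + 1) : ℝ) • jacobiPoly a b (n + 1) =
      (-2 : ℝ) • ((n + 1 : ℝ[X]) * jacobiPoly a b (n + 1)) := by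
    rw [mul_smul, ← Nat.cast_succ, ← Nat.cast_succ, ← nsmul_eq_mul, Nat.cast_smul_eq_nsmul]
  rw [scalar, jacobiPoly, jacobiPoly, reindex, map_sum, smul_sum]
  refine sum_congr rfl fun ⟨s, t⟩ _ => ?_
  have left := jacobiCoeff_add_one_mul_left ha b s t
  have right := jacobiCoeff_add_one_mul_right a hb s t
  refine Polynomial.funext fun x => ?_
  simp only [map_smul, jacobiRaise_jacobiBasis, eval_smul, eval_add, eval_mul, eval_natCast,
    eval_one, smul_eq_mul]
  linear_combination (-2 * (jacobiBasis s (t + 1)).eval x) * left -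
    2 * (jacobiBasis (s + 1) t).eval x * right

lemma eval_jacobiPoly (a b : ℝ) (n : ℕ) (x : ℝ) : (jacobiPoly a b n).eval x = jacobiP a b n x := by
  rw [jacobiPoly, jacobiP, eval_finsetSum, Finset.Nat.sum_antidiagonal_eq_sum_range_succ_mk]
  refine sum_congr rfl fun s hs => ?_
  obtain ⟨t, rfl⟩ := Nat.exists_eq_add_of_le (Nat.lt_succ_iff.1 (mem_range.1 hs))
  simp only [jacobiCoeff, jacobiBasis, add_tsub_cancel_left, eval_smul, eval_mul, eval_pow, eval_C,
    eval_sub, eval_add, eval_X, eval_one, smul_eq_mul, Nat.cast_add,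
    show (s + t + b - s + 1 : ℝ) = t + b + 1 by ring, one_div_mul_eq_div, mul_assoc]

lemma ne_neg_natCast_of_neg_one_lt {r : ℝ} (hr : -1 < r) (h₀ : r ≠ 0) (k : ℕ) : r ≠ -k := by
  rcases k.eq_zero_or_pos with rfl | hk
  · simpa using h₀
  · have : (1 : ℝ) ≤ k := by exact_mod_cast hk
    linarith

lemma add_add_natCast_add_one_ne_neg (ha : -1 < a) (hb : -1 < b) (hab : a + b ≠ -1) (n k : ℕ) :
    a + b + n + 1 ≠ -k := by
  cases n with
  | zero =>
    refine ne_neg_natCast_of_neg_one_lt (by push_cast; linarith) (fun h => hab ?_) k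
    push_cast at h
    linarith
  | succ n =>
    push_cast
    linarith [n.cast_nonneg (α := ℝ), k.cast_nonneg (α := ℝ)]

lemma gamma_add_two_mul (ha : -1 < a) (hb : -1 < b) (hab : a + b ≠ -1) (n : ℕ) :
    Real.Gamma (a + b + 2 * n + 1) =
      (ascPochhammer ℝ n).eval (a + b + n + 1) * Real.Gamma (a + b + n + 1) := by
  rw [← gamma_add_natCast (add_add_natCast_add_one_ne_neg ha hb hab n)]
  ring_nf

lemma jacobiMonic_eq_eval_monicJacobi (ha : -1 < a) (hb : -1 < b) (hab : a + b ≠ -1) (n : ℕ) :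
    jacobiMonic a b n = fun x => (monicJacobi a b n).eval x := by
  have hΓ := Real.Gamma_ne_zero (add_add_natCast_add_one_ne_neg ha hb hab n)
  ext x
  rw [jacobiMonic, monicJacobi, eval_smul, eval_jacobiPoly, smul_eq_mul,
    gamma_add_two_mul ha hb hab, mul_div_mul_right _ _ hΓ]

lemma monicJacobi_zero (ha : -1 < a) (hb : -1 < b) : monicJacobi a b 0 = 1 := by
  have hΓa := (Real.Gamma_pos_of_pos (by linarith : 0 < a + 1)).ne'
  have hΓb := (Real.Gamma_pos_of_pos (by linarith : 0 < b + 1)).ne'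
  simp [monicJacobi, jacobiPoly, jacobiCoeff, jacobiBasis, hΓa, hΓb]

lemma monicJacobi_succ (ha : -1 < a) (hb : -1 < b) (n : ℕ) :
    monicJacobi a b (n + 1) =
      (-(n + a + b + 2)⁻¹) • jacobiRaise a b (monicJacobi (a + 1) (b + 1) n) := by
  have hn : 0 < a + b + n + 2 := by linarith [n.cast_nonneg (α := ℝ)]
  have hpoch := (ascPochhammer_pos n (a + b + n + 3) (by linarith)).ne'
  rw [monicJacobi, monicJacobi, map_smul, jacobiRaise_jacobiPoly ha hb, smul_smul, smul_smul,
    ascPochhammer_eval_succ_left, Nat.factorial_succ]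
  congr 1
  push_cast
  rw [show a + b + (n + 1) + 1 + 1 = a + b + n + 3 by ring,
    show a + 1 + (b + 1) + n + 1 = a + b + n + 3 by ring,
    show a + b + (n + 1) + 1 = a + b + n + 2 by ring,
    show n + a + b + 2 = a + b + n + 2 by ring]
  field_simp
  ring

end JacobiPolynomials

/-! ### Orthogonality -/

/-- The squared norm of the monic Jacobi polynomial of degree `n` in `L²` of the Jacobi weight; the
Pochhammer symbol plays the same role as in `monicJacobi`. -/
noncomputable def jacobiNormSq (a b : ℝ) (n : ℕ) : ℝ :=
  2 ^ (a + b + 2 * n + 1) * n.factorial * (Real.Gamma (a + n + 1) * Real.Gamma (b + n + 1)) /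
    ((ascPochhammer ℝ n).eval (a + b + n + 1) * Real.Gamma (a + b + 2 * n + 2))

section Orthogonality

variable {a b : ℝ}

lemma natDegree_monicJacobi_le (ha : -1 < a) (hb : -1 < b) (n : ℕ) :
    (monicJacobi a b n).natDegree ≤ n := by
  induction n generalizing a b with
  | zero => rw [monicJacobi_zero ha hb, natDegree_one]
  | succ n ih =>
    rw [monicJacobi_succ ha hb]
    exact (natDegree_smul_le _ _).trans
      (natDegree_jacobiRaise_le a b (ih (by linarith) (by linarith)))

lemma coeff_monicJacobi_self (ha : -1 < a) (hb : -1 < b) (n : ℕ) :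
    (monicJacobi a b n).coeff n = 1 := by
  induction n generalizing a b with
  | zero => rw [monicJacobi_zero ha hb, coeff_one_zero]
  | succ n ih =>
    have hn : (n : ℝ) + a + b + 2 ≠ 0 := by linarith [n.cast_nonneg (α := ℝ)]
    have ha' : -1 < a + 1 := by linarith
    have hb' : -1 < b + 1 := by linarith
    rw [monicJacobi_succ ha hb, coeff_smul,
      coeff_jacobiRaise_of_natDegree_le a b (natDegree_monicJacobi_le ha' hb' n), ih ha' hb',
      smul_eq_mul]
    field_simp

lemma ascPochhammer_eval_add_add_natCast_pos (ha : -1 < a) (hb : -1 < b) (n : ℕ) :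
    0 < (ascPochhammer ℝ n).eval (a + b + n + 1) := by
  cases n with
  | zero => simp
  | succ n =>
    refine ascPochhammer_pos _ _ ?_
    push_cast
    linarith [n.cast_nonneg (α := ℝ)]

lemma jacobiNormSq_pos (ha : -1 < a) (hb : -1 < b) (n : ℕ) : 0 < jacobiNormSq a b n := by
  have := n.cast_nonneg (α := ℝ)
  have hpoch := ascPochhammer_eval_add_add_natCast_pos ha hb n
  have hΓa := Real.Gamma_pos_of_pos (by linarith : 0 < a + n + 1)
  have hΓb := Real.Gamma_pos_of_pos (by linarith : 0 < b + n + 1)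
  have hΓab := Real.Gamma_pos_of_pos (by linarith : 0 < a + b + 2 * n + 2)
  unfold jacobiNormSq
  positivity

lemma jacobiNormSq_zero (a b : ℝ) :
    jacobiNormSq a b 0 = 2 ^ (a + b + 1) * beta (b + 1) (a + 1) := by
  simp only [jacobiNormSq, beta, Nat.cast_zero, Nat.factorial_zero, Nat.cast_one,
    ascPochhammer_zero, eval_one, mul_zero, add_zero, one_mul, mul_one]
  rw [show b + 1 + (a + 1) = a + b + 2 by ring]
  ring

lemma jacobiNormSq_succ_eq_add_one (a b : ℝ) (n : ℕ) :
    jacobiNormSq a b (n + 1) = (n + 1) / (n + a + b + 2) * jacobiNormSq (a + 1) (b + 1) n := by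
  simp only [jacobiNormSq, ascPochhammer_eval_succ_left, Nat.factorial_succ]
  push_cast
  rw [show a + b + 2 * (n + 1) + 1 = a + 1 + (b + 1) + 2 * n + 1 by ring,
    show a + b + (n + 1) + 1 + 1 = a + 1 + (b + 1) + n + 1 by ring,
    show a + b + 2 * (n + 1) + 2 = a + 1 + (b + 1) + 2 * n + 2 by ring,
    show a + b + (n + 1) + 1 = n + a + b + 2 by ring,
    add_right_comm a (n + 1 : ℝ), add_right_comm b (n + 1 : ℝ),
    ← add_assoc (a + 1), ← add_assoc (b + 1), mul_assoc ((n : ℝ) + a + b + 2), div_mul_div_comm]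
  congr 1
  ac_rfl

lemma jacobiNormSq_succ (ha : -1 < a) (hb : -1 < b) {n : ℕ} (hn : 0 < a + b + n + 1) :
    jacobiNormSq a b (n + 1) =
      4 * (n + 1) * (a + n + 1) * (b + n + 1) * (a + b + n + 1) /
        ((a + b + 2 * n + 1) * (a + b + 2 * n + 2) ^ 2 * (a + b + 2 * n + 3)) *
        jacobiNormSq a b n := by
  have := n.cast_nonneg (α := ℝ)
  have hΓ := (Real.Gamma_pos_of_pos (by linarith : 0 < a + b + 2 * n + 2)).ne'
  have hpoch := (ascPochhammer_eval_add_add_natCast_pos ha hb n).ne'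
  have h₁ : a + b + 2 * n + 1 ≠ 0 := by linarith
  have h₂ : a + b + 2 * n + 2 ≠ 0 := by linarith
  have h₃ : a + b + 2 * n + 3 ≠ 0 := by linarith
  have poch_shift : (ascPochhammer ℝ (n + 1)).eval (a + b + n + 1 + 1) =
      (ascPochhammer ℝ n).eval (a + b + n + 1) * (a + b + 2 * n + 1) * (a + b + 2 * n + 2) /
        (a + b + n + 1) := by
    rw [eq_div_iff hn.ne', mul_comm, ← ascPochhammer_eval_succ_left, ascPochhammer_succ_eval,
      ascPochhammer_succ_eval]
    push_cast
    ring
  have gamma_shift : Real.Gamma (a + b + 2 * n + 2 + 2) =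
      (a + b + 2 * n + 3) * ((a + b + 2 * n + 2) * Real.Gamma (a + b + 2 * n + 2)) := by
    rw [← Real.Gamma_add_one h₂, ← one_add_one_eq_two, ← add_assoc, Real.Gamma_add_one]
    · ring
    · linarith
  have pow_shift : (2 : ℝ) ^ (a + b + 2 * n + 1 + 2) = 2 ^ (a + b + 2 * n + 1) * 4 := by
    rw [Real.rpow_add zero_lt_two]
    norm_num
  simp only [jacobiNormSq, Nat.factorial_succ]
  push_cast
  rw [← add_assoc a, ← add_assoc b, ← add_assoc (a + b), poch_shift,
    show a + b + 2 * (n + 1) + 1 = a + b + 2 * n + 1 + 2 by ring, pow_shift,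
    show a + b + 2 * (n + 1) + 2 = a + b + 2 * n + 2 + 2 by ring, gamma_shift,
    Real.Gamma_add_one (by linarith : a + n + 1 ≠ 0),
    Real.Gamma_add_one (by linarith : b + n + 1 ≠ 0)]
  field_simp

lemma jacobiMoment_monicJacobi_mul_of_natDegree_le (ha : -1 < a) (hb : -1 < b) {n : ℕ} {f : ℝ[X]}
    (hf : f.natDegree ≤ n) :
    jacobiMoment a b (monicJacobi a b n * f) = f.coeff n * jacobiNormSq a b n := by
  induction n generalizing a b f with
  | zero =>
    obtain ⟨c, rfl⟩ := natDegree_eq_zero.1 (Nat.le_zero.1 hf)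
    rw [monicJacobi_zero ha hb, one_mul, coeff_C_zero, ← mul_one (C c), ← smul_eq_C_mul,
      jacobiMoment_smul, jacobiMoment_one ha hb, jacobiNormSq_zero]
  | succ n ih =>
    have hf' : (derivative f).natDegree ≤ n := (natDegree_derivative_le f).trans (by omega)
    rw [monicJacobi_succ ha hb, smul_mul_assoc, jacobiMoment_smul,
      jacobiMoment_jacobiRaise_mul ha hb, ih (by linarith) (by linarith) hf', coeff_derivative,
      jacobiNormSq_succ_eq_add_one]
    ring

lemma jacobiMoment_monicJacobi_mul_monicJacobi (ha : -1 < a) (hb : -1 < b) (m n : ℕ) :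
    jacobiMoment a b (monicJacobi a b m * monicJacobi a b n) =
      if m = n then jacobiNormSq a b n else 0 := by
  wlog hmn : n ≤ m generalizing m n
  · rw [mul_comm, this n m (by omega), if_neg (by omega), if_neg (by omega)]
  have hdeg := natDegree_monicJacobi_le ha hb n
  rw [jacobiMoment_monicJacobi_mul_of_natDegree_le ha hb (hdeg.trans hmn)]
  split_ifs with h
  · rw [h, coeff_monicJacobi_self ha hb, one_mul]
  · rw [coeff_eq_zero_of_natDegree_lt (by omega), zero_mul]

lemma eq_of_jacobiMoment_monicJacobi_mul_eq (ha : -1 < a) (hb : -1 < b) {f g : ℝ[X]}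
    (h : ∀ n, jacobiMoment a b (monicJacobi a b n * f) = jacobiMoment a b (monicJacobi a b n * g)) :
    f = g := by
  have lead := jacobiMoment_monicJacobi_mul_of_natDegree_le ha hb (le_refl (f - g).natDegree)
  rw [mul_sub, jacobiMoment_sub ha hb, h, sub_self] at lead
  have := (mul_eq_zero.1 lead.symm).resolve_right (jacobiNormSq_pos ha hb _).ne'
  exact sub_eq_zero.1 (leadingCoeff_eq_zero.1 this)

end Orthogonality

/-! ### The skew operator -/

/-- The first-order differential operator `D` which is antisymmetric for the Jacobi weight with
parameters `(a, b)`, and for which `⟨f, D h⟩₁` is, up to sign, the moment of `f h`. -/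
noncomputable def jacobiSkewOp (a b : ℝ) : ℝ[X] →ₗ[ℝ] ℝ[X] :=
  jacobiRaise ((a - 1) / 2) ((b - 1) / 2)

/-- The factor by which `jacobiSkewOp` multiplies the leading coefficient in degree `n`. -/
noncomputable def jacobiSkewCoeff (a b : ℝ) (n : ℕ) : ℝ := -(n + (a + b + 2) / 2)

section SkewOperator

variable {a b : ℝ}

lemma jacobiSkewCoeff_ne_zero (ha : -1 < a) (hb : -1 < b) (n : ℕ) : jacobiSkewCoeff a b n ≠ 0 := by
  rw [jacobiSkewCoeff]
  linarith [n.cast_nonneg (α := ℝ)]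

lemma jacobiMoment_mul_jacobiSkewOp (ha : -1 < a) (hb : -1 < b) (f g : ℝ[X]) :
    jacobiMoment a b (f * jacobiSkewOp a b g) = -jacobiMoment a b (g * jacobiSkewOp a b f) := by
  have leibniz := jacobiRaise_mul ((a - 1) / 2) ((b - 1) / 2) ((a - 1) / 2) ((b - 1) / 2) f g
  rw [show (a - 1) / 2 + (a - 1) / 2 + 1 = a by ring,
    show (b - 1) / 2 + (b - 1) / 2 + 1 = b by ring] at leibniz
  have total := jacobiMoment_jacobiRaise ha hb (f * g)
  rw [leibniz, jacobiMoment_add ha hb, mul_comm _ g] at total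
  exact eq_neg_of_add_eq_zero_right total

lemma jacobiMoment_monicJacobi_mul_jacobiSkewOp (ha : -1 < a) (hb : -1 < b) (r k : ℕ) :
    jacobiMoment a b (monicJacobi a b r * jacobiSkewOp a b (monicJacobi a b k)) =
      (if r = k + 1 then jacobiSkewCoeff a b k * jacobiNormSq a b r else 0) -
        if k = r + 1 then jacobiSkewCoeff a b r * jacobiNormSq a b k else 0 := by
  have upper {r k : ℕ} (hkr : k < r) :
      jacobiMoment a b (monicJacobi a b r * jacobiSkewOp a b (monicJacobi a b k)) =
        if r = k + 1 then jacobiSkewCoeff a b k * jacobiNormSq a b r else 0 := by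
    have hk := natDegree_monicJacobi_le ha hb k
    have hdeg := natDegree_jacobiRaise_le ((a - 1) / 2) ((b - 1) / 2) hk
    rw [jacobiSkewOp, jacobiMoment_monicJacobi_mul_of_natDegree_le ha hb (hdeg.trans hkr)]
    split_ifs with hr
    · rw [hr, coeff_jacobiRaise_of_natDegree_le _ _ hk, coeff_monicJacobi_self ha hb,
        jacobiSkewCoeff]
      ring
    · rw [coeff_eq_zero_of_natDegree_lt (by omega), zero_mul]
  rcases lt_trichotomy r k with hrk | rfl | hkr
  · rw [jacobiMoment_mul_jacobiSkewOp ha hb, upper hrk, if_neg (by omega : r ≠ k + 1), zero_sub]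
  · have := jacobiMoment_mul_jacobiSkewOp ha hb (monicJacobi a b r) (monicJacobi a b r)
    rw [if_neg (by omega), sub_zero]
    linarith
  · rw [upper hkr, if_neg (by omega : k ≠ r + 1), sub_zero]

lemma jacobiSkewOp_monicJacobi_zero (ha : -1 < a) (hb : -1 < b) :
    jacobiSkewOp a b (monicJacobi a b 0) = jacobiSkewCoeff a b 0 • monicJacobi a b 1 := by
  refine eq_of_jacobiMoment_monicJacobi_mul_eq ha hb fun r => ?_
  rw [jacobiMoment_monicJacobi_mul_jacobiSkewOp ha hb, mul_smul_comm, jacobiMoment_smul,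
    jacobiMoment_monicJacobi_mul_monicJacobi ha hb, if_neg (by omega : 0 ≠ r + 1), sub_zero,
    zero_add, mul_ite, mul_zero]
  split_ifs with h
  · rw [h]
  · rfl

lemma jacobiSkewOp_monicJacobi_succ (ha : -1 < a) (hb : -1 < b) (k : ℕ) :
    jacobiSkewOp a b (monicJacobi a b (k + 1)) =
      jacobiSkewCoeff a b (k + 1) • monicJacobi a b (k + 2) +
        (-(jacobiSkewCoeff a b k * (jacobiNormSq a b (k + 1) / jacobiNormSq a b k))) •
          monicJacobi a b k := by
  have hk := (jacobiNormSq_pos ha hb k).ne'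
  refine eq_of_jacobiMoment_monicJacobi_mul_eq ha hb fun r => ?_
  rw [jacobiMoment_monicJacobi_mul_jacobiSkewOp ha hb, mul_add, jacobiMoment_add ha hb,
    mul_smul_comm, mul_smul_comm, jacobiMoment_smul, jacobiMoment_smul,
    jacobiMoment_monicJacobi_mul_monicJacobi ha hb, jacobiMoment_monicJacobi_mul_monicJacobi ha hb]
  rcases eq_or_ne r (k + 2) with rfl | hr
  · simp
  rcases eq_or_ne r k with rfl | hr'
  · rw [if_neg (by omega), if_pos rfl, if_neg (by omega), if_pos rfl]
    field_simp
    ring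
  · rw [if_neg (by omega), if_neg (by omega), if_neg (by omega), if_neg (by omega)]
    ring

end SkewOperator

/-! ### The skew form -/

/-- The `β = 1` Jacobi skew inner product of two polynomials. -/
noncomputable def jacobiSkewForm (a b : ℝ) (f g : ℝ[X]) : ℝ :=
  sip1J a b (fun x => f.eval x) (fun x => g.eval x)

section SkewForm

variable {a b : ℝ}

lemma jacobiSkewForm_eq_signForm (a b : ℝ) (f g : ℝ[X]) :
    jacobiSkewForm a b f g = 1 / 2 * signForm (volume.restrict (Set.Ioo (-1) 1))
      (fun x => jacobiWeight ((a - 1) / 2) ((b - 1) / 2) x * f.eval x)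
      (fun x => jacobiWeight ((a - 1) / 2) ((b - 1) / 2) x * g.eval x) := by
  rw [jacobiSkewForm, sip1J, signForm]
  congr! 5
  simp only [jacobiWeight]
  ring

lemma jacobiSkewForm_swap (ha : -1 < a) (hb : -1 < b) (f g : ℝ[X]) :
    jacobiSkewForm a b g f = -jacobiSkewForm a b f g := by
  have integrable (p : ℝ[X]) := integrableOn_jacobiWeight_mul_eval
    (by linarith : -1 < (a - 1) / 2) (by linarith : -1 < (b - 1) / 2) p
  rw [jacobiSkewForm_eq_signForm, jacobiSkewForm_eq_signForm,
    signForm_swap (integrable f) (integrable g), mul_neg]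

lemma jacobiSkewForm_smul_right (a b r : ℝ) (f g : ℝ[X]) :
    jacobiSkewForm a b f (r • g) = r * jacobiSkewForm a b f g := by
  rw [jacobiSkewForm_eq_signForm, jacobiSkewForm_eq_signForm, mul_left_comm,
    ← signForm_smul_right r]
  congr 2
  ext x
  simp only [eval_smul, Pi.smul_apply, smul_eq_mul, mul_left_comm]

lemma jacobiSkewForm_add_right (ha : -1 < a) (hb : -1 < b) (f g h : ℝ[X]) :
    jacobiSkewForm a b f (g + h) = jacobiSkewForm a b f g + jacobiSkewForm a b f h := by
  have integrable (p : ℝ[X]) := integrableOn_jacobiWeight_mul_eval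
    (by linarith : -1 < (a - 1) / 2) (by linarith : -1 < (b - 1) / 2) p
  simp only [jacobiSkewForm_eq_signForm]
  rw [← mul_add, ← signForm_add_right (integrable f) (integrable g) (integrable h)]
  congr 2
  ext x
  simp only [eval_add, Pi.add_apply, mul_add]

lemma integral_sign_sub_mul_jacobiRaise (ha : -1 < a) (hb : -1 < b) (h : ℝ[X]) {x : ℝ}
    (hx : x ∈ Set.Ioo (-1 : ℝ) 1) :
    ∫ y in Set.Ioo (-1) 1, Real.sign (y - x) * (jacobiWeight a b y * (jacobiRaise a b h).eval y) =
      -2 * (jacobiWeight (a + 1) (b + 1) x * h.eval x) := by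
  refine integral_sign_sub_mul_of_hasDerivAt
    (Φ := fun y => jacobiWeight (a + 1) (b + 1) y * h.eval y)
    ((continuousOn_jacobiWeight (by linarith) (by linarith) _).mul h.continuousOn)
    (fun y hy => hasDerivAt_jacobiWeight_mul_eval a b h hy)
    (integrableOn_jacobiWeight_mul_eval ha hb _) ?_ ?_ hx
  · simp only [jacobiWeight_neg_one _ (by linarith : b + 1 ≠ 0), zero_mul]
  · simp only [jacobiWeight_one (by linarith : a + 1 ≠ 0), zero_mul]

lemma jacobiSkewForm_jacobiSkewOp (ha : -1 < a) (hb : -1 < b) (f h : ℝ[X]) :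
    jacobiSkewForm a b f (jacobiSkewOp a b h) = -jacobiMoment a b (f * h) := by
  rw [jacobiSkewForm_eq_signForm, signForm, jacobiMoment, ← integral_neg, ← integral_const_mul]
  refine setIntegral_congr_fun measurableSet_Ioo fun x hx => ?_
  have inner := integral_sign_sub_mul_jacobiRaise
    (by linarith : -1 < (a - 1) / 2) (by linarith : -1 < (b - 1) / 2) h hx
  have weight := jacobiWeight_mul hx ((a - 1) / 2) ((b - 1) / 2) ((a - 1) / 2 + 1)
    ((b - 1) / 2 + 1)
  rw [show (a - 1) / 2 + ((a - 1) / 2 + 1) = a by ring,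
    show (b - 1) / 2 + ((b - 1) / 2 + 1) = b by ring] at weight
  simp only [mul_left_comm _ (jacobiWeight _ _ x * f.eval x), integral_const_mul, jacobiSkewOp,
    inner, eval_mul, ← weight]
  ring

lemma jacobiSkewForm_monicJacobi_even_eq_zero (ha : -1 < a) (hb : -1 < b) {f : ℝ[X]}
    (h₀ : jacobiSkewForm a b f (monicJacobi a b 0) = 0)
    (h : ∀ k, jacobiMoment a b (f * monicJacobi a b (2 * k + 1)) = 0) (n : ℕ) :
    jacobiSkewForm a b f (monicJacobi a b (2 * n)) = 0 := by
  induction n with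
  | zero => exact h₀
  | succ n ih =>
    have step := jacobiSkewForm_jacobiSkewOp ha hb f (monicJacobi a b (2 * n + 1))
    rw [h, jacobiSkewOp_monicJacobi_succ ha hb, jacobiSkewForm_add_right ha hb,
      jacobiSkewForm_smul_right, jacobiSkewForm_smul_right, ih, mul_zero, add_zero,
      neg_zero] at step
    exact (mul_eq_zero.1 step).resolve_left (jacobiSkewCoeff_ne_zero ha hb _)

lemma jacobiSkewForm_monicJacobi_even_even (ha : -1 < a) (hb : -1 < b) (m n : ℕ) :
    jacobiSkewForm a b (monicJacobi a b (2 * m)) (monicJacobi a b (2 * n)) = 0 := by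
  have moment (j k : ℕ) :
      jacobiMoment a b (monicJacobi a b (2 * j) * monicJacobi a b (2 * k + 1)) = 0 := by
    rw [jacobiMoment_monicJacobi_mul_monicJacobi ha hb, if_neg (by omega)]
  have zero_zero : jacobiSkewForm a b (monicJacobi a b 0) (monicJacobi a b 0) = 0 := by
    linarith [jacobiSkewForm_swap ha hb (monicJacobi a b 0) (monicJacobi a b 0)]
  have zero_even := jacobiSkewForm_monicJacobi_even_eq_zero ha hb zero_zero (moment 0)
  refine jacobiSkewForm_monicJacobi_even_eq_zero ha hb ?_ (moment m) n
  rw [jacobiSkewForm_swap ha hb, zero_even, neg_zero]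

end SkewForm

/-! ### The skew orthogonal family -/

section SkewOrthogonalFamily

variable {a b : ℝ}

lemma inv_smul_jacobiSkewOp_monicJacobi_succ (ha : -1 < a) (hb : -1 < b) {k : ℕ}
    (hk : 0 < a + b + k + 1) :
    (jacobiSkewCoeff a b (k + 1))⁻¹ • jacobiSkewOp a b (monicJacobi a b (k + 1)) =
      monicJacobi a b (k + 2) -
        (4 * (k + 1) * (k + 1 + a) * (k + 1 + b) * (a + b + (k + 1)) /
          ((a + b + 2 * (k + 1) - 1) * (a + b + 2 * (k + 1)) * (a + b + 2 * (k + 1) + 1) *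
            (a + b + 2 * (k + 1) + 2))) • monicJacobi a b k := by
  have := k.cast_nonneg (α := ℝ)
  have h₁ : a + b + 2 * k + 1 ≠ 0 := by linarith
  have h₂ : a + b + 2 * k + 2 ≠ 0 := by linarith
  have h₃ : a + b + 2 * k + 3 ≠ 0 := by linarith
  have h₄ : a + b + 2 * k + 4 ≠ 0 := by linarith
  have norm_ratio := jacobiNormSq_succ ha hb hk
  rw [← div_eq_iff (jacobiNormSq_pos ha hb k).ne'] at norm_ratio
  have coeff_ratio : (jacobiSkewCoeff a b (k + 1))⁻¹ * jacobiSkewCoeff a b k =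
      (a + b + 2 * k + 2) / (a + b + 2 * k + 4) := by
    rw [inv_mul_eq_div, div_eq_div_iff (jacobiSkewCoeff_ne_zero ha hb _) h₄]
    simp only [jacobiSkewCoeff]
    push_cast
    ring
  rw [jacobiSkewOp_monicJacobi_succ ha hb, smul_add, smul_smul, smul_smul,
    inv_mul_cancel₀ (jacobiSkewCoeff_ne_zero ha hb _), one_smul, sub_eq_add_neg, ← neg_smul,
    mul_neg, ← mul_assoc, coeff_ratio, norm_ratio]
  congr 3
  rw [show a + b + 2 * (k + 1) - 1 = a + b + 2 * k + 1 by ring,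
    show a + b + 2 * (k + 1 : ℝ) = a + b + 2 * k + 2 by ring,
    show a + b + 2 * k + 2 + 1 = a + b + 2 * (k : ℝ) + 3 by ring,
    show a + b + 2 * k + 2 + 2 = a + b + 2 * (k : ℝ) + 4 by ring]
  field_simp
  ring

lemma qJOE_even (ha : -1 < a) (hb : -1 < b) (hab : a + b ≠ -1) (m : ℕ) :
    qJOE a b (2 * m) = fun x => (monicJacobi a b (2 * m)).eval x := by
  rw [← jacobiMonic_eq_eval_monicJacobi ha hb hab]
  ext x
  rw [qJOE, if_pos (by omega)]

lemma qJOE_odd (ha : -1 < a) (hb : -1 < b) (hab : a + b ≠ -1) (m : ℕ) :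
    qJOE a b (2 * m + 1) = fun x =>
      ((jacobiSkewCoeff a b (2 * m))⁻¹ • jacobiSkewOp a b (monicJacobi a b (2 * m))).eval x := by
  ext x
  rw [qJOE, if_neg (by omega), jacobiMonic_eq_eval_monicJacobi ha hb hab,
    jacobiMonic_eq_eval_monicJacobi ha hb hab]
  cases m with
  | zero =>
    rw [mul_zero, zero_add, jacobiSkewOp_monicJacobi_zero ha hb,
      inv_smul_smul₀ (jacobiSkewCoeff_ne_zero ha hb 0)]
    simp
  | succ m =>
    have pos : 0 < a + b + (2 * m + 1 : ℕ) + 1 := by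
      push_cast
      linarith [m.cast_nonneg (α := ℝ)]
    rw [show 2 * (m + 1) = 2 * m + 1 + 1 by ring,
      inv_smul_jacobiSkewOp_monicJacobi_succ ha hb pos, eval_sub, eval_smul, smul_eq_mul]
    push_cast
    simp only [add_sub_cancel_right]

lemma sip1J_qJOE_odd_right (ha : -1 < a) (hb : -1 < b) (hab : a + b ≠ -1) (f : ℝ[X]) (n : ℕ) :
    sip1J a b (fun x => f.eval x) (qJOE a b (2 * n + 1)) =
      -(jacobiSkewCoeff a b (2 * n))⁻¹ * jacobiMoment a b (f * monicJacobi a b (2 * n)) := by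
  rw [qJOE_odd ha hb hab, ← jacobiSkewForm, jacobiSkewForm_smul_right,
    jacobiSkewForm_jacobiSkewOp ha hb, mul_neg, neg_mul]

lemma neg_inv_jacobiSkewCoeff_mul_jacobiNormSq (ha : -1 < a) (hb : -1 < b) (hab : a + b ≠ -1)
    (k : ℕ) :
    -(jacobiSkewCoeff a b k)⁻¹ * jacobiNormSq a b k =
      2 ^ (a + b + 2 * k + 2) * k.factorial * Real.Gamma (a + k + 1) * Real.Gamma (b + k + 1) *
        Real.Gamma (a + b + k + 1) /
        (Real.Gamma (a + b + 2 * k + 1) * Real.Gamma (a + b + 2 * k + 3)) := by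
  have := k.cast_nonneg (α := ℝ)
  have h₂ : a + b + 2 * k + 2 ≠ 0 := by linarith
  have hΓ := Real.Gamma_ne_zero (add_add_natCast_add_one_ne_neg ha hb hab k)
  have hΓ₂ := (Real.Gamma_pos_of_pos (by linarith : 0 < a + b + 2 * k + 2)).ne'
  have hpoch := (ascPochhammer_eval_add_add_natCast_pos ha hb k).ne'
  have coeff_eq : -(jacobiSkewCoeff a b k)⁻¹ = 2 / (a + b + 2 * k + 2) := by
    rw [jacobiSkewCoeff, inv_neg, neg_neg, inv_eq_one_div, div_eq_div_iff (by linarith) h₂]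
    ring
  have gamma_shift : Real.Gamma (a + b + 2 * k + 3) =
      (a + b + 2 * k + 2) * Real.Gamma (a + b + 2 * k + 2) := by
    rw [← Real.Gamma_add_one h₂]
    ring_nf
  have pow_shift : (2 : ℝ) ^ (a + b + 2 * k + 2) = 2 ^ (a + b + 2 * k + 1) * 2 := by
    rw [← Real.rpow_add_one two_ne_zero]
    ring_nf
  rw [coeff_eq, jacobiNormSq, gamma_add_two_mul ha hb hab, gamma_shift, pow_shift]
  field_simp

end SkewOrthogonalFamily

theorem jacobi_skew_orthogonal_beta1_general (a b : ℝ) (ha : -1 < a) (hb : -1 < b)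
    (hab : a + b ≠ -1) (m n : ℕ) :
    sip1J a b (qJOE a b (2 * m)) (qJOE a b (2 * n)) = 0 ∧
    sip1J a b (qJOE a b (2 * m + 1)) (qJOE a b (2 * n + 1)) = 0 ∧
    (m ≠ n → sip1J a b (qJOE a b (2 * m)) (qJOE a b (2 * n + 1)) = 0) ∧
    sip1J a b (qJOE a b (2 * m)) (qJOE a b (2 * m + 1))
      = 2 ^ (a + b + 4 * (m : ℝ) + 2) * (Nat.factorial (2 * m)) *
          Real.Gamma (a + 2 * (m : ℝ) + 1) * Real.Gamma (b + 2 * (m : ℝ) + 1) *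
          Real.Gamma (a + b + 2 * (m : ℝ) + 1) /
          (Real.Gamma (a + b + 4 * (m : ℝ) + 1) * Real.Gamma (a + b + 4 * (m : ℝ) + 3)) := by
  rw [qJOE_even ha hb hab m]
  refine ⟨?_, ?_, fun hmn => ?_, ?_⟩
  · rw [qJOE_even ha hb hab n]
    exact jacobiSkewForm_monicJacobi_even_even ha hb m n
  · rw [qJOE_odd ha hb hab m, sip1J_qJOE_odd_right ha hb hab, smul_mul_assoc, jacobiMoment_smul,
      mul_comm (jacobiSkewOp a b _), jacobiMoment_monicJacobi_mul_jacobiSkewOp ha hb,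
      if_neg (by omega), if_neg (by omega), sub_zero, mul_zero, mul_zero]
  · rw [sip1J_qJOE_odd_right ha hb hab, jacobiMoment_monicJacobi_mul_monicJacobi ha hb,
      if_neg (by omega), mul_zero]
  · rw [sip1J_qJOE_odd_right ha hb hab, jacobiMoment_monicJacobi_mul_monicJacobi ha hb, if_pos rfl,
      neg_inv_jacobiSkewCoeff_mul_jacobiNormSq ha hb hab]
    push_cast
    ring_nf

/-- The family `{q̃_j}` is skew orthogonal for the β = 1 Jacobi skew inner product. -/
theorem jacobi_skew_orthogonal_beta1 (a b : ℝ) (ha : 0 < a) (hb : 0 < b) (m n : ℕ) :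
    sip1J a b (qJOE a b (2 * m)) (qJOE a b (2 * n)) = 0 ∧
    sip1J a b (qJOE a b (2 * m + 1)) (qJOE a b (2 * n + 1)) = 0 ∧
    (m ≠ n → sip1J a b (qJOE a b (2 * m)) (qJOE a b (2 * n + 1)) = 0) ∧
    sip1J a b (qJOE a b (2 * m)) (qJOE a b (2 * m + 1))
      = 2 ^ (a + b + 4 * (m : ℝ) + 2) * (Nat.factorial (2 * m)) *
          Real.Gamma (a + 2 * (m : ℝ) + 1) * Real.Gamma (b + 2 * (m : ℝ) + 1) *
          Real.Gamma (a + b + 2 * (m : ℝ) + 1) /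
          (Real.Gamma (a + b + 4 * (m : ℝ) + 1) * Real.Gamma (a + b + 4 * (m : ℝ) + 3)) :=
  jacobi_skew_orthogonal_beta1_general a b (by linarith) (by linarith) (by linarith) m n
end
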